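/- arXiv:1406.0969 — 4 statements merged into one kernel-verified Lean document; each statement's English description precedes it below -/
import Mathlib

section
/- Let 0 < ν ≤ 1/2. Then there exist constants C_ν > 0 and C'_ν > 0 such that for all real s > 0: J_ν(s)² + Y_ν(s)² > 0, |J_ν(s)·cos(νπ) − Y_ν(s)·sin(νπ)| / (J_ν(s)² + Y_ν(s)²) ≤ C_ν · s^ν (1+s^{1−2ν})/(1+s^{1/2−ν}), and |J_ν(s)| / (J_ν(s)² + Y_ν(s)²) ≤ C'_ν · s^{3ν} (1+s^{1−2ν})/(1+s^{1/2+ν}). -/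
open MeasureTheory Filter Real

/-- The Bessel function of the first kind (Schläfli's integral representation):
`J_ν(s) = (1/π)∫_0^π cos(s sin θ - νθ) dθ - (sin(νπ)/π)∫_0^∞ e^{-s sinh t - νt} dt`. -/
noncomputable def besselJ (ν s : ℝ) : ℝ :=
  (1 / π) * ∫ θ in (0 : ℝ)..π, Real.cos (s * Real.sin θ - ν * θ) -
    (Real.sin (ν * π) / π) * ∫ t in Set.Ioi (0 : ℝ), Real.exp (-s * Real.sinh t - ν * t)

/-- The Bessel function of the second kind (integral representation):
`Y_ν(s) = (1/π)∫_0^π sin(s sin θ - νθ) dθ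
  - (1/π)∫_0^∞ (e^{νt} + e^{-νt} cos(νπ)) e^{-s sinh t} dt`. -/
noncomputable def besselY (ν s : ℝ) : ℝ :=
  (1 / π) * ∫ θ in (0 : ℝ)..π, Real.sin (s * Real.sin θ - ν * θ) -
    (1 / π) * ∫ t in Set.Ioi (0 : ℝ),
      (Real.exp (ν * t) + Real.exp (-ν * t) * Real.cos (ν * π)) * Real.exp (-s * Real.sinh t)


/-- The exponential part: `∫_0^∞ sinh^k t e^{-s sinh t + μ t} dt`. -/
noncomputable def bqP (μ : ℝ) (k : ℕ) (s : ℝ) : ℝ :=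
  ∫ t in Set.Ioi (0 : ℝ), Real.sinh t ^ k * Real.exp (-s * Real.sinh t + μ * t)

/-- The oscillating part: `∫_0^π sin^k θ cos(s sin θ - ν θ + a) dθ`. -/
noncomputable def bqA (ν : ℝ) (k : ℕ) (a s : ℝ) : ℝ :=
  ∫ θ in (0 : ℝ)..π, Real.sin θ ^ k * Real.cos (s * Real.sin θ - ν * θ + a)

lemma bq_sinh_lower (t : ℝ) (ht : 0 ≤ t) : t ^ 2 / 4 ≤ Real.sinh t := by
  have h1 := Real.quadratic_le_exp_of_nonneg ht
  have h2 : Real.exp (-t) ≤ 1 := Real.exp_le_one_iff.2 (by linarith)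
  rw [Real.sinh_eq]
  nlinarith

lemma bq_sinh_upper (t : ℝ) : Real.sinh t ≤ Real.exp t / 2 := by
  have := Real.exp_pos (-t)
  rw [Real.sinh_eq]
  linarith

lemma bq_dom (μ : ℝ) (k : ℕ) (c : ℝ) (hc : 0 < c) (t : ℝ) (ht : 0 ≤ t) :
    Real.sinh t ^ k * Real.exp (-c * Real.sinh t + μ * t) ≤
      Real.exp ((k + μ + 1) ^ 2 / c) * Real.exp (-t) := by
  have h0 : 0 ≤ Real.sinh t := Real.sinh_nonneg_iff.2 ht
  have h1 : Real.sinh t ^ k ≤ Real.exp (k * t) := by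
    rw [Real.exp_nat_mul]
    apply pow_le_pow_left₀ h0
    have := bq_sinh_upper t
    have := Real.exp_pos t
    linarith
  have h2 := bq_sinh_lower t ht
  calc _ ≤ Real.exp (k * t) * Real.exp (-c * Real.sinh t + μ * t) := by gcongr
    _ = Real.exp (k * t + (-c * Real.sinh t + μ * t)) := by rw [← Real.exp_add]
    _ ≤ Real.exp ((k + μ + 1) ^ 2 / c + (-t)) := by
      apply Real.exp_le_exp.2
      have h3 : c * (t ^ 2 / 4) ≤ c * Real.sinh t := by gcongr
      have h4 : (k + μ + 1) * t ≤ (k + μ + 1) ^ 2 / c + c * (t ^ 2 / 4) := by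
        rw [← sub_nonneg]
        have : (k + μ + 1) ^ 2 / c + c * (t ^ 2 / 4) - (k + μ + 1) * t =
          ((k + μ + 1) - c * t / 2) ^ 2 / c := by field_simp; ring
        rw [this]; positivity
      linarith
    _ = _ := by rw [← Real.exp_add]

lemma bq_integrable (μ : ℝ) (k : ℕ) (c : ℝ) (hc : 0 < c) :
    IntegrableOn (fun t => Real.sinh t ^ k * Real.exp (-c * Real.sinh t + μ * t))
      (Set.Ioi (0 : ℝ)) := by
  have h : IntegrableOn (fun t => Real.exp ((k + μ + 1) ^ 2 / c) * Real.exp (-t))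
      (Set.Ioi (0 : ℝ)) := (integrableOn_exp_neg_Ioi 0).const_mul _
  refine Integrable.mono' h (Continuous.aestronglyMeasurable (by fun_prop)) ?_
  refine (ae_restrict_iff' measurableSet_Ioi).2 (Eventually.of_forall fun t ht => ?_)
  have ht' : 0 ≤ t := le_of_lt ht
  have h0 : 0 ≤ Real.sinh t := Real.sinh_nonneg_iff.2 ht'
  rw [Real.norm_of_nonneg (by positivity)]
  exact bq_dom μ k c hc t ht'

lemma bqP_deriv (μ : ℝ) (k : ℕ) (s : ℝ) (hs : 0 < s) :
    HasDerivAt (bqP μ k) (-bqP μ (k + 1) s) s := by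
  have hb : Metric.ball s (s / 2) ∈ nhds s := Metric.ball_mem_nhds _ (by linarith)
  have := (hasDerivAt_integral_of_dominated_loc_of_deriv_le
    (μ := volume.restrict (Set.Ioi (0 : ℝ)))
    (F := fun x t => Real.sinh t ^ k * Real.exp (-x * Real.sinh t + μ * t))
    (F' := fun x t => -(Real.sinh t ^ (k + 1) * Real.exp (-x * Real.sinh t + μ * t)))
    (bound := fun t => Real.sinh t ^ (k + 1) * Real.exp (-(s / 2) * Real.sinh t + μ * t))
    (x₀ := s) hb
    (Eventually.of_forall fun x => Continuous.aestronglyMeasurable (by fun_prop))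
    (bq_integrable μ k s hs) (Continuous.aestronglyMeasurable (by fun_prop)) ?_
    (bq_integrable μ (k + 1) (s / 2) (by linarith)) ?_).2
  · rw [integral_neg] at this
    exact this
  · refine (ae_restrict_iff' measurableSet_Ioi).2 (Eventually.of_forall fun t ht x hx => ?_)
    have h0 : 0 ≤ Real.sinh t := Real.sinh_nonneg_iff.2 (le_of_lt ht)
    rw [norm_neg, Real.norm_of_nonneg (by positivity)]
    rw [Metric.mem_ball, Real.dist_eq, abs_lt] at hx
    have : s / 2 * Real.sinh t ≤ x * Real.sinh t := by
      apply mul_le_mul_of_nonneg_right _ h0; linarith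
    gcongr
    linarith
  · refine Eventually.of_forall fun t x hx => ?_
    have h1 : HasDerivAt (fun x : ℝ => -x * Real.sinh t + μ * t) (-1 * Real.sinh t) x :=
      ((hasDerivAt_id x).neg.mul_const _).add_const _
    refine (h1.exp.const_mul (Real.sinh t ^ k)).congr_deriv ?_
    ring

lemma bqA_deriv (ν : ℝ) (k : ℕ) (a s : ℝ) :
    HasDerivAt (bqA ν k a) (bqA ν (k + 1) (a + π / 2) s) s := by
  have hb : Metric.ball s 1 ∈ nhds s := Metric.ball_mem_nhds _ (by norm_num)
  have := (intervalIntegral.hasDerivAt_integral_of_dominated_loc_of_deriv_le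
    (μ := volume) (a := (0 : ℝ)) (b := π)
    (F := fun x t => Real.sin t ^ k * Real.cos (x * Real.sin t - ν * t + a))
    (F' := fun x t => Real.sin t ^ (k + 1) * Real.cos (x * Real.sin t - ν * t + (a + π / 2)))
    (bound := fun t => 1)
    (x₀ := s) hb
    (Eventually.of_forall fun x => Continuous.aestronglyMeasurable (by fun_prop))
    (Continuous.intervalIntegrable (by fun_prop) _ _)
    (Continuous.aestronglyMeasurable (by fun_prop)) ?_
    (by simp) ?_).2
  · exact this
  · refine Eventually.of_forall fun t ht x hx => ?_
    rw [norm_mul, norm_pow]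
    have h1 : ‖Real.sin t‖ ^ (k + 1) ≤ 1 := pow_le_one₀ (norm_nonneg _) (Real.abs_sin_le_one t)
    have h2 : ‖Real.cos (x * Real.sin t - ν * t + (a + π / 2))‖ ≤ 1 := Real.abs_cos_le_one _
    exact mul_le_one₀ h1 (norm_nonneg _) h2
  · refine Eventually.of_forall fun t ht x hx => ?_
    have h1 : HasDerivAt (fun x : ℝ => x * Real.sin t - ν * t + a) (1 * Real.sin t) x :=
      (((hasDerivAt_id x).mul_const _).sub_const _).add_const _
    refine (h1.cos.const_mul (Real.sin t ^ k)).congr_deriv ?_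
    rw [← add_assoc, Real.cos_add_pi_div_two]
    ring

lemma bqA_ode (ν a s : ℝ) :
    s ^ 2 * bqA ν 2 (a + π / 2 + π / 2) s + s * bqA ν 1 (a + π / 2) s + (s ^ 2 - ν ^ 2) * bqA ν 0 a s =
      (ν - s) * Real.sin (a - ν * π) - (s + ν) * Real.sin a := by
  have hd : ∀ θ ∈ Set.uIcc (0 : ℝ) π, HasDerivAt
      (fun θ => (s * Real.cos θ + ν) * Real.sin (s * Real.sin θ - ν * θ + a))
      (s ^ 2 * (Real.sin θ ^ 2 * Real.cos (s * Real.sin θ - ν * θ + (a + π / 2 + π / 2)))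
        + s * (Real.sin θ ^ 1 * Real.cos (s * Real.sin θ - ν * θ + (a + π / 2)))
        + (s ^ 2 - ν ^ 2) * (Real.sin θ ^ 0 * Real.cos (s * Real.sin θ - ν * θ + a))) θ := by
    intro θ _
    have h1 : HasDerivAt (fun θ => s * Real.cos θ + ν) (s * -Real.sin θ) θ :=
      ((Real.hasDerivAt_cos θ).const_mul s).add_const _
    have h2 : HasDerivAt (fun θ => s * Real.sin θ - ν * θ + a) (s * Real.cos θ - ν * 1) θ :=
      (((Real.hasDerivAt_sin θ).const_mul s).sub ((hasDerivAt_id θ).const_mul ν)).add_const _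
    refine (HasDerivAt.fun_mul h1 h2.sin).congr_deriv ?_
    rw [← add_assoc, ← add_assoc, Real.cos_add_pi_div_two, Real.sin_add_pi_div_two,
      Real.cos_add_pi_div_two]
    have := Real.sin_sq θ
    rw [this]; ring
  have h := intervalIntegral.integral_eq_sub_of_hasDerivAt hd
    (Continuous.intervalIntegrable (by fun_prop) _ _)
  rw [intervalIntegral.integral_add (Continuous.intervalIntegrable (by fun_prop) _ _)
    (Continuous.intervalIntegrable (by fun_prop) _ _),
    intervalIntegral.integral_add (Continuous.intervalIntegrable (by fun_prop) _ _)
    (Continuous.intervalIntegrable (by fun_prop) _ _), intervalIntegral.integral_const_mul,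
    intervalIntegral.integral_const_mul, intervalIntegral.integral_const_mul] at h
  unfold bqA
  rw [h]
  simp
  ring_nf

lemma bqP_ode (μ s : ℝ) (hs : 0 < s) :
    s ^ 2 * bqP μ 2 s - s * bqP μ 1 s + (s ^ 2 - μ ^ 2) * bqP μ 0 s = s + μ := by
  have hd : ∀ t ∈ Set.Ici (0 : ℝ), HasDerivAt
      (fun t => -((s * Real.cosh t + μ) * Real.exp (-s * Real.sinh t + μ * t)))
      (s ^ 2 * (Real.sinh t ^ 2 * Real.exp (-s * Real.sinh t + μ * t))
        - s * (Real.sinh t ^ 1 * Real.exp (-s * Real.sinh t + μ * t))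
        + (s ^ 2 - μ ^ 2) * (Real.sinh t ^ 0 * Real.exp (-s * Real.sinh t + μ * t))) t := by
    intro t _
    have h1 : HasDerivAt (fun t => s * Real.cosh t + μ) (s * Real.sinh t) t :=
      ((Real.hasDerivAt_cosh t).const_mul s).add_const _
    have h2 : HasDerivAt (fun t => -s * Real.sinh t + μ * t) (-s * Real.cosh t + μ * 1) t :=
      (((Real.hasDerivAt_sinh t).const_mul (-s)).add ((hasDerivAt_id t).const_mul μ))
    refine (HasDerivAt.fun_mul h1 h2.exp).fun_neg.congr_deriv ?_
    have := Real.cosh_sq t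
    linear_combination (s^2 * Real.exp (-s * Real.sinh t + μ * t)) * this
  have i2 := (bq_integrable μ 2 s hs).const_mul (s ^ 2)
  have i1 := (bq_integrable μ 1 s hs).const_mul s
  have i0 := (bq_integrable μ 0 s hs).const_mul (s ^ 2 - μ ^ 2)
  have i21 : Integrable (fun t => s ^ 2 * (Real.sinh t ^ 2 * Real.exp (-s * Real.sinh t + μ * t))
        - s * (Real.sinh t ^ 1 * Real.exp (-s * Real.sinh t + μ * t)))
        (volume.restrict (Set.Ioi (0 : ℝ))) := i2.sub i1
  have lim : Tendsto (fun t => -((s * Real.cosh t + μ) * Real.exp (-s * Real.sinh t + μ * t)))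
      atTop (nhds 0) := by
    rw [← neg_zero]
    apply Tendsto.neg
    have hb : Tendsto (fun t : ℝ => (s + |μ|) * (Real.exp ((((0:ℕ):ℝ) + (μ + 1) + 1) ^ 2 / s) * Real.exp (-t)))
      atTop (nhds 0) := by
      have := (Real.tendsto_exp_neg_atTop_nhds_zero.const_mul
        (Real.exp ((((0:ℕ):ℝ) + (μ + 1) + 1) ^ 2 / s))).const_mul (s + |μ|)
      simpa using this
    refine squeeze_zero_norm' ?_ hb
    filter_upwards [eventually_ge_atTop 0] with t ht
    have h := bq_dom (μ + 1) 0 s hs t ht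
    rw [pow_zero, one_mul] at h
    rw [norm_mul, Real.norm_of_nonneg (Real.exp_pos _).le]
    have h3 : ‖s * Real.cosh t + μ‖ ≤ (s + |μ|) * Real.exp t := by
      have e1 : 1 ≤ Real.exp t := Real.one_le_exp ht
      have e2 : Real.exp (-t) ≤ 1 := Real.exp_le_one_iff.2 (by linarith)
      have e3 : Real.cosh t ≤ Real.exp t := by rw [Real.cosh_eq]; linarith
      have e4 := Real.cosh_pos t
      have e5 := abs_nonneg μ
      calc _ ≤ ‖s * Real.cosh t‖ + ‖μ‖ := norm_add_le _ _
        _ = s * Real.cosh t + |μ| := by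
          rw [Real.norm_of_nonneg (by positivity), Real.norm_eq_abs]
        _ ≤ _ := by nlinarith
    calc _ ≤ (s + |μ|) * Real.exp t * Real.exp (-s * Real.sinh t + μ * t) := by gcongr
      _ = (s + |μ|) * Real.exp (-s * Real.sinh t + (μ + 1) * t) := by
        rw [mul_assoc, ← Real.exp_add]; ring_nf
      _ ≤ _ := by
        apply mul_le_mul_of_nonneg_left h
        positivity
  have h := integral_Ioi_of_hasDerivAt_of_tendsto' hd (i21.add i0) lim
  rw [integral_add i21 i0, integral_sub i2 i1, integral_const_mul, integral_const_mul,
    integral_const_mul] at h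
  unfold bqP
  rw [h]
  simp

lemma bqJ_eq (ν s : ℝ) :
    besselJ ν s = (1 / π) * (bqA ν 0 0 s - Real.sin (ν * π) * bqP (-ν) 0 s) := by
  unfold besselJ bqA bqP
  rw [intervalIntegral.integral_sub (Continuous.intervalIntegrable (by fun_prop) _ _)
    (Continuous.intervalIntegrable (by fun_prop) _ _), intervalIntegral.integral_const]
  have hpi := Real.pi_pos
  have e : ∀ t : ℝ, -s * Real.sinh t - ν * t = -s * Real.sinh t + -ν * t := fun t => by ring
  simp only [e, pow_zero, one_mul, add_zero, sub_zero, smul_eq_mul]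
  field_simp

lemma bqY_eq (ν s : ℝ) (hs : 0 < s) :
    besselY ν s = (1 / π) * (bqA ν 0 (-(π / 2)) s - bqP ν 0 s
      - Real.cos (ν * π) * bqP (-ν) 0 s) := by
  unfold besselY
  have h1 : ∫ t in Set.Ioi (0 : ℝ),
      (Real.exp (ν * t) + Real.exp (-ν * t) * Real.cos (ν * π)) * Real.exp (-s * Real.sinh t) =
      bqP ν 0 s + Real.cos (ν * π) * bqP (-ν) 0 s := by
    unfold bqP
    rw [← integral_const_mul, ← integral_add (bq_integrable ν 0 s hs)
      ((bq_integrable (-ν) 0 s hs).const_mul _)]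
    congr 1
    ext t
    rw [Real.exp_add, Real.exp_add]
    ring
  rw [h1]
  unfold bqA
  rw [intervalIntegral.integral_sub (Continuous.intervalIntegrable (by fun_prop) _ _)
    (Continuous.intervalIntegrable (by fun_prop) _ _), intervalIntegral.integral_const]
  have hpi := Real.pi_pos
  simp only [← sub_eq_add_neg, Real.cos_sub_pi_div_two, pow_zero, one_mul, sub_zero, smul_eq_mul]
  field_simp
  ring

/-- `f` solves the Bessel equation on `(0,∞)`, with derivatives `f1`, `f2`. -/
def BqSol (ν : ℝ) (f f1 f2 : ℝ → ℝ) : Prop :=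
  ∀ s, 0 < s → HasDerivAt f (f1 s) s ∧ HasDerivAt f1 (f2 s) s ∧
    s ^ 2 * f2 s + s * f1 s + (s ^ 2 - ν ^ 2) * f s = 0

lemma bqJ_sol (ν : ℝ) : ∃ f1 f2, BqSol ν (besselJ ν) f1 f2 := by
  refine ⟨fun s => (1 / π) * (bqA ν 1 (0 + π / 2) s - Real.sin (ν * π) * -bqP (-ν) 1 s),
    fun s => (1 / π) * (bqA ν 2 (0 + π / 2 + π / 2) s - Real.sin (ν * π) * -(-bqP (-ν) 2 s)),
    fun s hs => ⟨?_, ?_, ?_⟩⟩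
  · rw [show besselJ ν = fun s => _ from funext (bqJ_eq ν)]
    exact ((bqA_deriv ν 0 0 s).sub ((bqP_deriv (-ν) 0 s hs).const_mul _)).const_mul _
  · exact ((bqA_deriv ν 1 _ s).sub ((bqP_deriv (-ν) 1 s hs).fun_neg.const_mul _)).const_mul _
  · rw [bqJ_eq]
    have h1 := bqA_ode ν 0 s
    have h2 := bqP_ode (-ν) s hs
    rw [zero_sub, Real.sin_neg, Real.sin_zero] at h1
    linear_combination (1 / π) * h1 - (1 / π) * Real.sin (ν * π) * h2

lemma bqY_sol (ν : ℝ) : ∃ f1 f2, BqSol ν (besselY ν) f1 f2 := by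
  refine ⟨fun s => (1 / π) * (bqA ν 1 (-(π / 2) + π / 2) s - -bqP ν 1 s
      - Real.cos (ν * π) * -bqP (-ν) 1 s),
    fun s => (1 / π) * (bqA ν 2 (-(π / 2) + π / 2 + π / 2) s - -(-bqP ν 2 s)
      - Real.cos (ν * π) * -(-bqP (-ν) 2 s)),
    fun s hs => ⟨?_, ?_, ?_⟩⟩
  · have h : HasDerivAt (fun s => (1 / π) * (bqA ν 0 (-(π / 2)) s - bqP ν 0 s
      - Real.cos (ν * π) * bqP (-ν) 0 s)) _ s :=
      (((bqA_deriv ν 0 (-(π / 2)) s).sub (bqP_deriv ν 0 s hs)).sub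
        ((bqP_deriv (-ν) 0 s hs).const_mul _)).const_mul _
    refine h.congr_of_eventuallyEq ?_
    filter_upwards [lt_mem_nhds hs] with x hx
    exact bqY_eq ν x hx
  · exact (((bqA_deriv ν 1 _ s).sub (bqP_deriv ν 1 s hs).fun_neg).sub
        ((bqP_deriv (-ν) 1 s hs).fun_neg.const_mul _)).const_mul _
  · rw [bqY_eq ν s hs]
    have h1 := bqA_ode ν (-(π / 2)) s
    have h2 := bqP_ode (-ν) s hs
    have h3 := bqP_ode ν s hs
    rw [Real.sin_neg, Real.sin_pi_div_two, show -(π / 2) - ν * π = -(ν * π + π / 2) by ring,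
      Real.sin_neg, Real.sin_add_pi_div_two] at h1
    linear_combination (1 / π) * h1 - (1 / π) * h3 - (1 / π) * Real.cos (ν * π) * h2

lemma bq_wronsk {ν : ℝ} {f f1 f2 g g1 g2 : ℝ → ℝ} (hf : BqSol ν f f1 f2) (hg : BqSol ν g g1 g2)
    (s : ℝ) (hs : 0 < s) :
    HasDerivAt (fun s => s * (f s * g1 s - f1 s * g s)) 0 s := by
  obtain ⟨a1, a2, a3⟩ := hf s hs
  obtain ⟨b1, b2, b3⟩ := hg s hs
  refine (HasDerivAt.fun_mul (hasDerivAt_id' s)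
    (HasDerivAt.fun_sub (HasDerivAt.fun_mul a1 b2) (HasDerivAt.fun_mul a2 b1))).congr_deriv ?_
  apply mul_left_cancel₀ hs.ne'
  linear_combination f s * b3 - g s * a3

lemma bq_wronsk_const {ν : ℝ} {f f1 f2 g g1 g2 : ℝ → ℝ} (hf : BqSol ν f f1 f2)
    (hg : BqSol ν g g1 g2) :
    ∃ w, ∀ s, 0 < s → s * (f s * g1 s - f1 s * g s) = w := by
  have hd : DifferentiableOn ℝ (fun s => s * (f s * g1 s - f1 s * g s)) (Set.Ioi 0) :=
    fun s hs => (bq_wronsk hf hg s hs).differentiableAt.differentiableWithinAt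
  obtain ⟨w, hw⟩ := isOpen_Ioi.exists_is_const_of_deriv_eq_zero isPreconnected_Ioi hd
    (fun s hs => (bq_wronsk hf hg s hs).deriv)
  exact ⟨w, fun s hs => hw s hs⟩

/-- The energy of `√s f(s)`. -/
noncomputable def bqE (ν : ℝ) (f f1 : ℝ → ℝ) (s : ℝ) : ℝ :=
  s * (f1 s + f s / (2 * s)) ^ 2 + (s + (1 / 4 - ν ^ 2) / s) * f s ^ 2

lemma bqE_deriv {ν : ℝ} {f f1 f2 : ℝ → ℝ} (hf : BqSol ν f f1 f2) (s : ℝ) (hs : 0 < s) :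
    HasDerivAt (bqE ν f f1) (-(2 * (1 / 4 - ν ^ 2) / s ^ 2 * f s ^ 2)) s := by
  obtain ⟨a1, a2, a3⟩ := hf s hs
  have hs' := hs.ne'
  have id := hasDerivAt_id' s
  have h1 := HasDerivAt.fun_mul id ((HasDerivAt.fun_add a2
    (HasDerivAt.fun_div a1 (id.const_mul 2) (by positivity))).fun_pow 2)
  have h2 := HasDerivAt.fun_mul (HasDerivAt.fun_add id
    (HasDerivAt.fun_div (hasDerivAt_const s (1 / 4 - ν ^ 2)) id hs')) (a1.fun_pow 2)
  refine (HasDerivAt.fun_add h1 h2).congr_deriv ?_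
  have e : f2 s = -(s * f1 s + (s ^ 2 - ν ^ 2) * f s) / s ^ 2 := by
    field_simp; linarith
  have e21 : (2 : ℕ) - 1 = 1 := rfl
  rw [e]
  simp only [e21, pow_one, Nat.cast_ofNat]
  field_simp
  ring

lemma bqE_anti {ν : ℝ} (hν0 : 0 < ν) (hν : ν ≤ 1 / 2) {f f1 f2 : ℝ → ℝ} (hf : BqSol ν f f1 f2)
    (d s : ℝ) (hd : 0 < d) (hs : d ≤ s) : bqE ν f f1 s ≤ bqE ν f f1 d := by
  have hq : 0 ≤ 1 / 4 - ν ^ 2 := by nlinarith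
  have : AntitoneOn (bqE ν f f1) (Set.Ioi 0) := by
    apply antitoneOn_of_deriv_nonpos (convex_Ioi 0)
    · exact fun s hs => (bqE_deriv hf s hs).continuousAt.continuousWithinAt
    · rw [interior_Ioi]
      exact fun s hs => (bqE_deriv hf s hs).differentiableAt.differentiableWithinAt
    · rw [interior_Ioi]
      intro s hs
      rw [(bqE_deriv hf s hs).deriv]
      have : 0 ≤ 2 * (1 / 4 - ν ^ 2) / s ^ 2 * f s ^ 2 := by positivity
      linarith
  exact this hd (hd.trans_le hs) hs

/-- Lower bound for the modulus, away from zero. -/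
lemma bq_lower {ν : ℝ} (hν0 : 0 < ν) (hν : ν ≤ 1 / 2) {f f1 f2 g g1 g2 : ℝ → ℝ}
    (hf : BqSol ν f f1 f2) (hg : BqSol ν g g1 g2) (w : ℝ) (hw0 : w ≠ 0)
    (hw : ∀ s, 0 < s → s * (f s * g1 s - f1 s * g s) = w) (d : ℝ) (hd : 0 < d) :
    ∃ c > 0, ∀ s, d ≤ s → c ≤ s * (f s ^ 2 + g s ^ 2) := by
  have hq : 0 ≤ 1 / 4 - ν ^ 2 := by nlinarith
  have key : ∀ s, d ≤ s →
      w ^ 2 ≤ s * (f s ^ 2 + g s ^ 2) * (bqE ν f f1 d + bqE ν g g1 d) := by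
    intro s hs
    have hs0 : 0 < s := hd.trans_le hs
    have e1 := bqE_anti hν0 hν hf d s hd hs
    have e2 := bqE_anti hν0 hν hg d s hd hs
    set p := f1 s + f s / (2 * s) with hp
    set q := g1 s + g s / (2 * s) with hq'
    have e3 : s * p ^ 2 ≤ bqE ν f f1 s := by
      have : 0 ≤ (s + (1 / 4 - ν ^ 2) / s) * f s ^ 2 := by positivity
      unfold bqE; linarith
    have e4 : s * q ^ 2 ≤ bqE ν g g1 s := by
      have : 0 ≤ (s + (1 / 4 - ν ^ 2) / s) * g s ^ 2 := by positivity
      unfold bqE; linarith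
    have e5 : w = s * (f s * q - p * g s) := by
      rw [← hw s hs0, hp, hq']; ring
    calc w ^ 2 ≤ s * (f s ^ 2 + g s ^ 2) * (s * p ^ 2 + s * q ^ 2) := by
          rw [e5]
          have : 0 ≤ (s * (f s * p + g s * q)) ^ 2 := sq_nonneg _
          linarith
      _ ≤ _ := by
        have : s * p ^ 2 + s * q ^ 2 ≤ bqE ν f f1 d + bqE ν g g1 d := by linarith
        gcongr
  have hE : 0 < bqE ν f f1 d + bqE ν g g1 d := by
    have h1 := key d le_rfl
    have h2 : 0 < w ^ 2 := by positivity
    have h3 : 0 ≤ d * (f d ^ 2 + g d ^ 2) := by positivity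
    by_contra h
    nlinarith
  refine ⟨w ^ 2 / (bqE ν f f1 d + bqE ν g g1 d), by positivity, fun s hs => ?_⟩
  rw [div_le_iff₀ hE]
  exact key s hs

lemma bq_wronsk_ne {ν : ℝ} (hν0 : 0 < ν) {f f1 f2 g g1 g2 : ℝ → ℝ}
    (hf : BqSol ν f f1 f2) (hg : BqSol ν g g1 g2) (d : ℝ) (hd : 0 < d) (C c : ℝ) (hc : 0 < c)
    (hfp : ∀ s, 0 < s → s < d → 0 < f s) (hfu : ∀ s, 0 < s → s < d → f s ≤ C * s ^ ν)
    (hgl : ∀ s, 0 < s → s < d → c * s ^ (-ν) ≤ |g s|) (w : ℝ)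
    (hw : ∀ s, 0 < s → s * (f s * g1 s - f1 s * g s) = w) : w ≠ 0 := by
  rintro rfl
  have hdv : ∀ s ∈ Set.Ioo 0 d, HasDerivAt (fun s => g s / f s) 0 s := by
    intro s hs
    obtain ⟨a1, a2, a3⟩ := hf s hs.1
    obtain ⟨b1, b2, b3⟩ := hg s hs.1
    have hne := (hfp s hs.1 hs.2).ne'
    refine (HasDerivAt.fun_div b1 a1 hne).congr_deriv ?_
    have := (mul_eq_zero.1 (hw s hs.1)).resolve_left hs.1.ne'
    rw [show g1 s * f s - g s * f1 s = 0 by linarith, zero_div]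
  obtain ⟨k, hk⟩ := isOpen_Ioo.exists_is_const_of_deriv_eq_zero isPreconnected_Ioo
    (fun s hs => (hdv s hs).differentiableAt.differentiableWithinAt)
    (fun s hs => (hdv s hs).deriv)
  have h1 : ∀ s ∈ Set.Ioo 0 d, c ≤ |k| * C * s ^ (2 * ν) := by
    intro s hs
    have hfs := hfp s hs.1 hs.2
    have e : g s = k * f s := by
      have := hk s hs
      field_simp at this
      linarith
    have h := hgl s hs.1 hs.2
    rw [e, abs_mul, abs_of_pos hfs] at h
    have h2 : |k| * f s ≤ |k| * (C * s ^ ν) := by gcongr; exact hfu s hs.1 hs.2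
    have hp : 0 < s ^ ν := Real.rpow_pos_of_pos hs.1 _
    have h3 : s ^ (2 * ν) = s ^ ν * s ^ ν := by rw [← Real.rpow_add hs.1]; ring_nf
    have h4 := h.trans h2
    rw [Real.rpow_neg hs.1.le, ← div_eq_mul_inv, div_le_iff₀ hp] at h4
    rw [h3]; linarith
  have hlim : Tendsto (fun s : ℝ => |k| * C * s ^ (2 * ν)) (nhdsWithin 0 (Set.Ioi 0)) (nhds 0) := by
    have : ContinuousAt (fun s : ℝ => |k| * C * s ^ (2 * ν)) 0 :=
      (Real.continuousAt_rpow_const 0 (2 * ν) (Or.inr (by linarith))).const_mul _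
    have h := this.tendsto
    rw [Real.zero_rpow (by linarith), mul_zero] at h
    exact h.mono_left nhdsWithin_le_nhds
  have := ge_of_tendsto hlim (b := c) (by
    filter_upwards [Ioo_mem_nhdsGT hd] with s hs
    exact h1 s hs)
  linarith

lemma bqP_nonneg (μ s : ℝ) : 0 ≤ bqP μ 0 s := by
  unfold bqP
  apply integral_nonneg
  intro t
  simp only [pow_zero, one_mul, Pi.zero_apply]
  positivity

lemma bqP_sub (μ s : ℝ) (hs : 0 < s) (S : Set ℝ) (hS : S ⊆ Set.Ioi 0) :
    ∫ t in S, Real.exp (-s * Real.sinh t + μ * t) ≤ bqP μ 0 s := by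
  have hi := bq_integrable μ 0 s hs
  unfold bqP
  simp only [pow_zero, one_mul] at hi ⊢
  exact setIntegral_mono_set hi (Eventually.of_forall fun t => (Real.exp_pos _).le)
    (LE.le.eventuallyLE hS)

lemma bqP_pos_lower (ν s : ℝ) (hν0 : 0 < ν) (hs : 0 < s) (hs1 : s ≤ 1) :
    Real.exp (-Real.exp 1) * s ^ (-ν) ≤ bqP ν 0 s := by
  set T := -Real.log s with hT
  have hT0 : 0 ≤ T := by have := Real.log_nonpos hs.le hs1; linarith
  have hsub : Set.Ioc T (T + 1) ⊆ Set.Ioi 0 := fun t ht => lt_of_le_of_lt hT0 ht.1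
  refine le_trans ?_ (bqP_sub ν s hs (Set.Ioc T (T + 1)) hsub)
  have hi := (bq_integrable ν 0 s hs).mono_set hsub
  simp only [pow_zero, one_mul] at hi
  have h := setIntegral_ge_of_const_le_real (c := Real.exp (-Real.exp 1) * s ^ (-ν))
    measurableSet_Ioc (by simp) ?_ hi
  · simpa using h
  · intro t ht
    rw [Real.rpow_def_of_pos hs, ← Real.exp_add]
    apply Real.exp_le_exp.2
    have h1 := bq_sinh_upper t
    have h2 : s * Real.sinh t ≤ Real.exp 1 := by
      have h3 : Real.exp t ≤ Real.exp (T + 1) := Real.exp_le_exp.2 ht.2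
      have h4 : s * Real.exp (T + 1) = Real.exp 1 := by
        rw [Real.exp_add, hT, Real.exp_neg, Real.exp_log hs]; field_simp
      have h5 := Real.exp_pos t
      calc s * Real.sinh t ≤ s * Real.exp (T + 1) := by gcongr; linarith
        _ = _ := h4
    have h6 : ν * T ≤ ν * t := by have := ht.1.le; gcongr
    rw [hT] at h6
    linarith

lemma bqP_neg_lower (ν s : ℝ) (hν0 : 0 < ν) (hν : ν ≤ 1 / 2) (hs : 0 < s) (hs1 : s ≤ 1) :
    1 / ν - (1 / ν + 1 / (1 - ν)) * s ^ ν ≤ bqP (-ν) 0 s := by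
  set T := -Real.log s with hT
  have hν1 : 0 < 1 - ν := by linarith
  have hT0 : 0 ≤ T := by have := Real.log_nonpos hs.le hs1; linarith
  have hsub : Set.Ioc 0 T ⊆ Set.Ioi 0 := fun t ht => ht.1
  refine le_trans ?_ (bqP_sub (-ν) s hs (Set.Ioc 0 T) hsub)
  rw [← intervalIntegral.integral_of_le hT0]
  have hd : ∀ t ∈ Set.uIcc 0 T, HasDerivAt
      (fun t => -(Real.exp (-ν * t) / ν) - s * (Real.exp ((1 - ν) * t) / (1 - ν)))
      (Real.exp (-ν * t) - s * Real.exp ((1 - ν) * t)) t := by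
    intro t _
    have h1 : HasDerivAt (fun t : ℝ => -ν * t) (-ν * 1) t := (hasDerivAt_id' t).const_mul _
    have h2 : HasDerivAt (fun t : ℝ => (1 - ν) * t) ((1 - ν) * 1) t :=
      (hasDerivAt_id' t).const_mul _
    refine ((h1.exp.div_const ν).fun_neg.fun_sub ((h2.exp.div_const (1 - ν)).const_mul s)).congr_deriv ?_
    field_simp
  have h := intervalIntegral.integral_eq_sub_of_hasDerivAt hd
    (Continuous.intervalIntegrable (by fun_prop) _ _)
  have hm : ∫ t in (0 : ℝ)..T, (Real.exp (-ν * t) - s * Real.exp ((1 - ν) * t)) ≤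
      ∫ t in (0 : ℝ)..T, Real.exp (-s * Real.sinh t + -ν * t) := by
    apply intervalIntegral.integral_mono_on hT0 (Continuous.intervalIntegrable (by fun_prop) _ _)
      (Continuous.intervalIntegrable (by fun_prop) _ _)
    intro t ht
    have h1 := bq_sinh_upper t
    have h2 := Real.add_one_le_exp (-s * Real.sinh t)
    have h3 := Real.exp_pos t
    have h4 := Real.exp_pos (-ν * t)
    have h5 : Real.exp ((1 - ν) * t) = Real.exp t * Real.exp (-ν * t) := by
      rw [← Real.exp_add]; ring_nf
    rw [Real.exp_add, h5]
    have h6 : s * Real.sinh t ≤ s * Real.exp t := by gcongr; linarith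
    have h7 : 1 - s * Real.exp t ≤ Real.exp (-s * Real.sinh t) := by linarith
    calc _ = (1 - s * Real.exp t) * Real.exp (-ν * t) := by ring
      _ ≤ _ := by gcongr
  refine le_trans ?_ hm
  rw [h]
  have e1 : Real.exp (-ν * T) = s ^ ν := by
    rw [Real.rpow_def_of_pos hs, hT]; ring_nf
  have e2 : s * Real.exp ((1 - ν) * T) = s ^ ν := by
    rw [← e1, show -ν * T = -T + (1 - ν) * T by ring, Real.exp_add (-T), hT, neg_neg,
      Real.exp_log hs]
  rw [e1, ← mul_div_assoc, e2]
  simp only [mul_zero, Real.exp_zero]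
  have : 0 ≤ s * (1 / (1 - ν)) := by positivity
  have e3 : (1 / ν + 1 / (1 - ν)) * s ^ ν = s ^ ν / ν + s ^ ν / (1 - ν) := by ring
  linarith

lemma bqP_neg_upper (ν s : ℝ) (hν0 : 0 < ν) (hs : 0 < s) (hs1 : s ≤ 1 / 2) :
    bqP (-ν) 0 s ≤ 1 / ν - (1 - Real.exp (-(1 / 4))) / ν * s ^ ν := by
  set T := -Real.log s with hT
  have hT0 : 0 ≤ T := by have := Real.log_nonpos hs.le (by linarith : s ≤ 1); linarith
  have i0 := integrableOn_exp_mul_Ioi (a := -ν) (by linarith) 0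
  have hi := bq_integrable (-ν) 0 s hs
  simp only [pow_zero, one_mul] at hi
  have e0 := integral_exp_mul_Ioi (a := -ν) (by linarith) 0
  have eT := integral_exp_mul_Ioi (a := -ν) (by linarith) T
  have hsub : Set.Ioi T ⊆ Set.Ioi 0 := fun t ht => lt_of_le_of_lt hT0 ht
  have hP : bqP (-ν) 0 s = ∫ t in Set.Ioi (0 : ℝ), Real.exp (-s * Real.sinh t + -ν * t) := by
    unfold bqP; simp only [pow_zero, one_mul]
  have hdif : Integrable (fun t => Real.exp (-ν * t) - Real.exp (-s * Real.sinh t + -ν * t))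
    (volume.restrict (Set.Ioi (0 : ℝ))) := i0.sub hi
  have h1 : 1 / ν - bqP (-ν) 0 s =
      ∫ t in Set.Ioi (0 : ℝ), (Real.exp (-ν * t) - Real.exp (-s * Real.sinh t + -ν * t)) := by
    rw [integral_sub i0 hi, e0, hP]
    simp
  have h2 : ∫ t in Set.Ioi T, (Real.exp (-ν * t) - Real.exp (-s * Real.sinh t + -ν * t)) ≤
      ∫ t in Set.Ioi (0 : ℝ), (Real.exp (-ν * t) - Real.exp (-s * Real.sinh t + -ν * t)) := by
    refine setIntegral_mono_set hdif ?_ (LE.le.eventuallyLE hsub)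
    refine (ae_restrict_iff' measurableSet_Ioi).2 (Eventually.of_forall fun t ht => ?_)
    have h0 : 0 ≤ Real.sinh t := Real.sinh_nonneg_iff.2 (le_of_lt ht)
    simp only [Pi.zero_apply, sub_nonneg]
    apply Real.exp_le_exp.2
    nlinarith
  have h3 : ∫ t in Set.Ioi T, (1 - Real.exp (-(1 / 4))) * Real.exp (-ν * t) ≤
      ∫ t in Set.Ioi T, (Real.exp (-ν * t) - Real.exp (-s * Real.sinh t + -ν * t)) := by
    refine setIntegral_mono_on ((i0.mono_set hsub).const_mul _)
      (IntegrableOn.mono_set hdif hsub) measurableSet_Ioi fun t ht => ?_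
    have a1 : Real.sinh T ≤ Real.sinh t := Real.sinh_le_sinh.2 (le_of_lt ht)
    have a2 : s * Real.sinh T = (1 - s ^ 2) / 2 := by
      rw [Real.sinh_eq, hT, neg_neg, Real.exp_neg, Real.exp_log hs]
      field_simp
    have a3 : s * Real.sinh T ≤ s * Real.sinh t := by gcongr
    have a4 : Real.exp (-s * Real.sinh t) ≤ Real.exp (-(1 / 4)) := by
      apply Real.exp_le_exp.2
      nlinarith
    have a5 := Real.exp_pos (-ν * t)
    rw [Real.exp_add]
    nlinarith
  rw [integral_const_mul, eT] at h3
  have e1 : Real.exp (-ν * T) = s ^ ν := by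
    rw [Real.rpow_def_of_pos hs, hT]; ring_nf
  rw [e1] at h3
  have e2 : (1 - Real.exp (-(1 / 4))) / ν * s ^ ν =
    (1 - Real.exp (-(1 / 4))) * (-s ^ ν / -ν) := by rw [neg_div_neg_eq]; ring
  linarith

lemma bqA_bound (ν s : ℝ) (hν0 : 0 < ν) (hs : 0 < s) :
    |bqA ν 0 0 s - Real.sin (ν * π) / ν| ≤ s * π := by
  have hpi := Real.pi_pos
  have h0 : ∫ θ in (0 : ℝ)..π, Real.cos (ν * θ) = Real.sin (ν * π) / ν := by
    rw [intervalIntegral.integral_comp_mul_left _ hν0.ne', integral_cos]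
    simp
    field_simp
  rw [← h0]
  unfold bqA
  rw [← intervalIntegral.integral_sub (Continuous.intervalIntegrable (by fun_prop) _ _)
    (Continuous.intervalIntegrable (by fun_prop) _ _)]
  have := intervalIntegral.norm_integral_le_of_norm_le_const (a := (0 : ℝ)) (b := π) (C := s)
    (f := fun θ => Real.sin θ ^ 0 * Real.cos (s * Real.sin θ - ν * θ + 0) - Real.cos (ν * θ)) ?_
  · rwa [sub_zero, abs_of_pos hpi] at this
  · intro θ _
    rw [pow_zero, one_mul, add_zero, Real.norm_eq_abs, ← Real.cos_neg (ν * θ)]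
    refine (Real.abs_cos_sub_cos_le _ _).trans ?_
    rw [show s * Real.sin θ - ν * θ - -(ν * θ) = s * Real.sin θ by ring, abs_mul, abs_of_pos hs]
    have := Real.abs_sin_le_one θ
    nlinarith

lemma bqA_le (ν a s : ℝ) : bqA ν 0 a s ≤ π := by
  have hpi := Real.pi_pos
  have := intervalIntegral.norm_integral_le_of_norm_le_const (a := (0 : ℝ)) (b := π) (C := 1)
    (f := fun θ => Real.sin θ ^ 0 * Real.cos (s * Real.sin θ - ν * θ + a)) ?_
  · rw [sub_zero, abs_of_pos hpi, one_mul] at this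
    exact (le_abs_self _).trans this
  · intro θ _
    rw [pow_zero, one_mul]
    exact Real.abs_cos_le_one _

lemma bq_small_ev (p K e : ℝ) (hp : 0 < p) (he : 0 < e) :
    ∀ᶠ s : ℝ in nhdsWithin 0 (Set.Ioi 0), K * s ^ p < e := by
  have : ContinuousAt (fun s : ℝ => K * s ^ p) 0 :=
    (Real.continuousAt_rpow_const 0 p (Or.inr hp.le)).const_mul _
  have h := this.tendsto
  rw [Real.zero_rpow hp.ne', mul_zero] at h
  exact (h.mono_left nhdsWithin_le_nhds).eventually_lt_const he

/-- Behaviour near zero. -/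
lemma bq_small (ν : ℝ) (hν0 : 0 < ν) (hν : ν ≤ 1 / 2) :
    ∃ d > 0, d ≤ 1 ∧ ∃ C > 0, ∃ c > 0, ∀ s, 0 < s → s < d →
      0 < besselJ ν s ∧ besselJ ν s ≤ C * s ^ ν ∧ c * s ^ (-ν) ≤ |besselY ν s| := by
  have hpi := Real.pi_pos
  have hsin : 0 < Real.sin (ν * π) := Real.sin_pos_of_pos_of_lt_pi (by positivity) (by nlinarith)
  have hcos : 0 ≤ Real.cos (ν * π) :=
    Real.cos_nonneg_of_neg_pi_div_two_le_of_le (by nlinarith) (by nlinarith)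
  have hk : 0 < 1 - Real.exp (-(1 / 4)) := by
    have : Real.exp (-(1 / 4)) < 1 := by rw [← Real.exp_zero]; exact Real.exp_lt_exp.2 (by norm_num)
    linarith
  have hν1 : 0 < 1 - ν := by linarith
  set κ := (1 - Real.exp (-(1 / 4))) / ν with hκ
  have hκ0 : 0 < κ := by positivity
  set b := Real.exp (-Real.exp 1) with hb
  have hb0 : 0 < b := Real.exp_pos _
  have ev := ((bq_small_ev (1 - ν) π (Real.sin (ν * π) * κ) hν1 (by positivity)).and
    (bq_small_ev ν π (b / 2) hν0 (by positivity))).and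
    (Ioo_mem_nhdsGT (show (0 : ℝ) < 1 / 2 by norm_num))
  obtain ⟨d, hd0, hd⟩ := mem_nhdsGT_iff_exists_Ioo_subset.1 ev
  have hd0' : 0 < d := hd0
  refine ⟨min d 1, by positivity, min_le_right _ _,
    (1 / π) * (π + Real.sin (ν * π) * (1 / ν + 1 / (1 - ν))), by positivity,
    b / (2 * π), by positivity, fun s hs hsd => ?_⟩
  obtain ⟨⟨h1, h2⟩, h3⟩ := hd ⟨hs, hsd.trans_le (min_le_left _ _)⟩
  have hs2 : s ≤ 1 / 2 := h3.2.le
  have hp : 0 < s ^ ν := Real.rpow_pos_of_pos hs _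
  have hsplit : s = s ^ (1 - ν) * s ^ ν := by
    rw [← Real.rpow_add hs]; simp
  have hle : s ≤ s ^ ν := by
    have : s ^ (1 - ν) ≤ 1 := Real.rpow_le_one hs.le (by linarith) hν1.le
    nlinarith
  have hA := abs_le.1 (bqA_bound ν s hν0 hs)
  have hP1 := bqP_neg_lower ν s hν0 hν hs (by linarith)
  have hP2 := bqP_neg_upper ν s hν0 hs hs2
  have hP1' := mul_le_mul_of_nonneg_left hP1 hsin.le
  have hP2' := mul_le_mul_of_nonneg_left hP2 hsin.le
  have hsν : Real.sin (ν * π) * (1 / ν) = Real.sin (ν * π) / ν := by ring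
  refine ⟨?_, ?_, ?_⟩
  · rw [bqJ_eq]
    apply mul_pos (by positivity)
    have : s * π < Real.sin (ν * π) * (κ * s ^ ν) := by
      calc s * π = (π * s ^ (1 - ν)) * s ^ ν := by
            rw [mul_assoc, ← hsplit]; ring
        _ < (Real.sin (ν * π) * κ) * s ^ ν := by gcongr
        _ = _ := by ring
    rw [mul_sub] at hP2'
    linarith [hA.1]
  · rw [bqJ_eq, mul_assoc]
    apply mul_le_mul_of_nonneg_left _ (by positivity)
    rw [mul_sub] at hP1'
    have : s * π ≤ s ^ ν * π := by gcongr
    rw [add_mul, mul_assoc]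
    linarith [hA.2]
  · rw [bqY_eq ν s hs]
    have hP := bqP_pos_lower ν s hν0 hs (by linarith)
    have hB := bqA_le ν (-(π / 2)) s
    have hN := mul_nonneg hcos (bqP_nonneg (-ν) s)
    have h4 : π ≤ b / 2 * s ^ (-ν) := by
      rw [Real.rpow_neg hs.le, ← div_eq_mul_inv, le_div_iff₀ hp]
      exact h2.le
    rw [abs_mul, abs_of_pos (by positivity : 0 < 1 / π)]
    have h5 : b / 2 * s ^ (-ν) ≤ |bqA ν 0 (-(π / 2)) s - bqP ν 0 s
      - Real.cos (ν * π) * bqP (-ν) 0 s| := by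
      refine le_trans ?_ (neg_le_abs _)
      linarith
    calc b / (2 * π) * s ^ (-ν) = 1 / π * (b / 2 * s ^ (-ν)) := by field_simp
      _ ≤ _ := by gcongr

/-- Purely algebraic step: a linear form bounded by the modulus, divided by its square. -/
lemma bq_div (x M L : ℝ) (hM : 0 < M) (hx : x ^ 2 ≤ M) (hL : 0 < L) (h : L ^ 2 ≤ M) :
    |x| / M ≤ 1 / L := by
  rw [div_le_div_iff₀ hM hL, one_mul]
  have h1 : |x| ≤ √M := by
    rw [← Real.sqrt_sq_eq_abs]; exact Real.sqrt_le_sqrt hx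
  have h2 : L ≤ √M := Real.le_sqrt_of_sq_le h
  calc |x| * L ≤ √M * √M := by gcongr
    _ = M := Real.mul_self_sqrt hM.le

lemma bq_R1 (ν s : ℝ) (hs : 0 < s) :
    s ^ ν / 2 ≤ s ^ ν * (1 + s ^ (1 - 2 * ν)) / (1 + s ^ (1 / 2 - ν)) ∧
    s ^ (1 / 2 : ℝ) / 2 ≤ s ^ ν * (1 + s ^ (1 - 2 * ν)) / (1 + s ^ (1 / 2 - ν)) := by
  have hp : 0 < s ^ ν := Real.rpow_pos_of_pos hs _
  have hx : 0 < s ^ (1 / 2 - ν) := Real.rpow_pos_of_pos hs _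
  have e1 : s ^ (1 - 2 * ν) = (s ^ (1 / 2 - ν)) ^ 2 := by
    rw [← Real.rpow_natCast (s ^ (1 / 2 - ν)), ← Real.rpow_mul hs.le]
    norm_num; ring_nf
  have e2 : s ^ (1 / 2 : ℝ) = s ^ ν * s ^ (1 / 2 - ν) := by
    rw [← Real.rpow_add hs]; ring_nf
  rw [e1, e2]
  set x := s ^ (1 / 2 - ν)
  set y := s ^ ν
  constructor
  · rw [div_le_div_iff₀ (by norm_num) (by positivity), mul_assoc]
    apply mul_le_mul_of_nonneg_left _ hp.le
    nlinarith [sq_nonneg (x - 1)]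
  · rw [div_le_div_iff₀ (by norm_num) (by positivity), mul_assoc, mul_assoc]
    apply mul_le_mul_of_nonneg_left _ hp.le
    nlinarith [sq_nonneg (x - 1)]

lemma bq_R2_small (ν s : ℝ) (hν0 : 0 < ν) (hs : 0 < s) (hs1 : s ≤ 1) :
    s ^ (3 * ν) / 2 ≤ s ^ (3 * ν) * (1 + s ^ (1 - 2 * ν)) / (1 + s ^ (1 / 2 + ν)) := by
  have hp : 0 < s ^ (3 * ν) := Real.rpow_pos_of_pos hs _
  have hx : 0 < s ^ (1 - 2 * ν) := Real.rpow_pos_of_pos hs _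
  have hy : 0 < s ^ (1 / 2 + ν) := Real.rpow_pos_of_pos hs _
  have hy1 : s ^ (1 / 2 + ν) ≤ 1 := Real.rpow_le_one hs.le hs1 (by linarith)
  rw [div_le_div_iff₀ (by norm_num) (by positivity), mul_assoc]
  apply mul_le_mul_of_nonneg_left _ hp.le
  linarith

lemma bq_R2_large (ν s d : ℝ) (hν0 : 0 < ν) (hd : 0 < d) (hs : d ≤ s) :
    s ^ (1 / 2 : ℝ) ≤ (1 + d ^ (-(1 / 2 + ν))) *
      (s ^ (3 * ν) * (1 + s ^ (1 - 2 * ν)) / (1 + s ^ (1 / 2 + ν))) := by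
  have hs0 := hd.trans_le hs
  have hp : 0 < s ^ (3 * ν) := Real.rpow_pos_of_pos hs0 _
  have hq : 0 < s ^ (1 + ν) := Real.rpow_pos_of_pos hs0 _
  have hy : 0 < s ^ (1 / 2 + ν) := Real.rpow_pos_of_pos hs0 _
  have hz : 0 < d ^ (-(1 / 2 + ν)) := Real.rpow_pos_of_pos hd _
  have e1 : s ^ (3 * ν) * s ^ (1 - 2 * ν) = s ^ (1 + ν) := by
    rw [← Real.rpow_add hs0]; ring_nf
  have e2 : s ^ (1 / 2 : ℝ) * s ^ (1 / 2 + ν) = s ^ (1 + ν) := by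
    rw [← Real.rpow_add hs0]; ring_nf
  have e3 : s ^ (1 / 2 : ℝ) = s ^ (-(1 / 2 + ν)) * s ^ (1 + ν) := by
    rw [← Real.rpow_add hs0]; ring_nf
  have e4 : s ^ (-(1 / 2 + ν)) ≤ d ^ (-(1 / 2 + ν)) :=
    Real.rpow_le_rpow_of_nonpos hd hs (by linarith)
  rw [← mul_div_assoc, le_div_iff₀ (by positivity), mul_add, mul_add, e1, e2, mul_one, mul_one]
  have e5 : s ^ (1 / 2 : ℝ) ≤ d ^ (-(1 / 2 + ν)) * s ^ (1 + ν) := by rw [e3]; gcongr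
  have : 0 < d ^ (-(1 / 2 + ν)) * s ^ (3 * ν) := by positivity
  nlinarith

/-- **Lemma (uniform Bessel quotient bounds).**
For `0 < ν ≤ 1/2` there exist constants `C_ν, C'_ν > 0` such that for all `s > 0`:
`J_ν(s)² + Y_ν(s)² > 0`,
`|J_ν(s) cos νπ - Y_ν(s) sin νπ|/(J_ν(s)²+Y_ν(s)²) ≤ C_ν s^ν (1+s^{1-2ν})/(1+s^{1/2-ν})`, and
`|J_ν(s)|/(J_ν(s)²+Y_ν(s)²) ≤ C'_ν s^{3ν} (1+s^{1-2ν})/(1+s^{1/2+ν})`. -/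
theorem bessel_quotient_bounds (ν : ℝ) (hν0 : 0 < ν) (hν : ν ≤ 1 / 2) :
    ∃ C > (0 : ℝ), ∃ C' > (0 : ℝ), ∀ s : ℝ, 0 < s →
      0 < besselJ ν s ^ 2 + besselY ν s ^ 2 ∧
      |besselJ ν s * Real.cos (ν * π) - besselY ν s * Real.sin (ν * π)| /
          (besselJ ν s ^ 2 + besselY ν s ^ 2) ≤
        C * s ^ ν * (1 + s ^ (1 - 2 * ν)) / (1 + s ^ (1 / 2 - ν)) ∧
      |besselJ ν s| / (besselJ ν s ^ 2 + besselY ν s ^ 2) ≤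
        C' * s ^ (3 * ν) * (1 + s ^ (1 - 2 * ν)) / (1 + s ^ (1 / 2 + ν)) := by
  obtain ⟨d, hd0, hd1, K, hK, k, hk, hsm⟩ := bq_small ν hν0 hν
  obtain ⟨f1, f2, hf⟩ := bqJ_sol ν
  obtain ⟨g1, g2, hg⟩ := bqY_sol ν
  obtain ⟨w, hw⟩ := bq_wronsk_const hf hg
  have hw0 : w ≠ 0 := bq_wronsk_ne hν0 hf hg d hd0 K k hk (fun s h1 h2 => (hsm s h1 h2).1)
    (fun s h1 h2 => (hsm s h1 h2).2.1) (fun s h1 h2 => (hsm s h1 h2).2.2) w hw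
  obtain ⟨c, hc, hl⟩ := bq_lower hν0 hν hf hg w hw0 hw d hd0
  have hz : 0 < d ^ (-(1 / 2 + ν)) := Real.rpow_pos_of_pos hd0 _
  have hsc : 0 < √c := Real.sqrt_pos.2 hc
  refine ⟨2 / k + 2 / √c, by positivity, 2 * K / k ^ 2 + (1 + d ^ (-(1 / 2 + ν))) / √c,
    by positivity, fun s hs => ?_⟩
  obtain ⟨r1, r2⟩ := bq_R1 ν s hs
  have hp : 0 < s ^ ν := Real.rpow_pos_of_pos hs _
  have hp3 : 0 < s ^ (3 * ν) := Real.rpow_pos_of_pos hs _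
  have hh : 0 < s ^ (1 / 2 : ℝ) := Real.rpow_pos_of_pos hs _
  have hx1 : 0 < s ^ (1 - 2 * ν) := Real.rpow_pos_of_pos hs _
  have hx2 : 0 < s ^ (1 / 2 + ν) := Real.rpow_pos_of_pos hs _
  have asc : ∀ x y z t : ℝ, x * y * z / t = x * (y * z / t) := fun x y z t => by ring
  rw [asc (2 / k + 2 / √c), asc (2 * K / k ^ 2 + (1 + d ^ (-(1 / 2 + ν))) / √c)]
  set R1 := s ^ ν * (1 + s ^ (1 - 2 * ν)) / (1 + s ^ (1 / 2 - ν)) with hR1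
  set R2 := s ^ (3 * ν) * (1 + s ^ (1 - 2 * ν)) / (1 + s ^ (1 / 2 + ν)) with hR2
  have hR1p : 0 < R1 := by linarith
  have hR2p : 0 < R2 := by positivity
  have hlin : (besselJ ν s * Real.cos (ν * π) - besselY ν s * Real.sin (ν * π)) ^ 2 ≤
      besselJ ν s ^ 2 + besselY ν s ^ 2 := by
    have h1 := sq_nonneg (besselJ ν s * Real.sin (ν * π) + besselY ν s * Real.cos (ν * π))
    have h2 := Real.sin_sq_add_cos_sq (ν * π)
    have : besselJ ν s ^ 2 + besselY ν s ^ 2 =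
      (besselJ ν s ^ 2 + besselY ν s ^ 2) * (Real.sin (ν * π) ^ 2 + Real.cos (ν * π) ^ 2) := by
      rw [h2, mul_one]
    rw [this]
    linarith
  have hJ : besselJ ν s ^ 2 ≤ besselJ ν s ^ 2 + besselY ν s ^ 2 := by
    linarith [sq_nonneg (besselY ν s)]
  rcases lt_or_ge s d with hsd | hsd
  · obtain ⟨j1, j2, y1⟩ := hsm s hs hsd
    have hL : 0 < k * s ^ (-ν) := by
      have := Real.rpow_pos_of_pos hs (-ν)
      positivity
    have hLM : (k * s ^ (-ν)) ^ 2 ≤ besselJ ν s ^ 2 + besselY ν s ^ 2 := by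
      have : (k * s ^ (-ν)) ^ 2 ≤ |besselY ν s| ^ 2 := by gcongr
      rw [sq_abs] at this
      linarith [sq_nonneg (besselJ ν s)]
    have hM : 0 < besselJ ν s ^ 2 + besselY ν s ^ 2 := lt_of_lt_of_le (by positivity) hLM
    refine ⟨hM, ?_, ?_⟩
    · refine (bq_div _ _ _ hM hlin hL hLM).trans ?_
      have e : 1 / (k * s ^ (-ν)) = 2 / k * (s ^ ν / 2) := by
        rw [Real.rpow_neg hs.le]; field_simp
      rw [e, add_mul]
      have : 2 / k * (s ^ ν / 2) ≤ 2 / k * R1 := by gcongr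
      have : 0 < 2 / √c * R1 := by positivity
      linarith
    · have r3 := bq_R2_small ν s hν0 hs (by linarith)
      rw [← hR2] at r3
      rw [abs_of_pos j1]
      have e3 : s ^ (3 * ν) = (s ^ ν) ^ 3 := by
        rw [← Real.rpow_natCast (s ^ ν), ← Real.rpow_mul hs.le]
        norm_num; ring_nf
      calc _ ≤ (K * s ^ ν) / (k * s ^ (-ν)) ^ 2 := by gcongr
        _ = 2 * K / k ^ 2 * (s ^ (3 * ν) / 2) := by
          rw [Real.rpow_neg hs.le, e3]; field_simp
        _ ≤ 2 * K / k ^ 2 * R2 := by gcongr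
        _ ≤ _ := by
          rw [add_mul]
          have : 0 < (1 + d ^ (-(1 / 2 + ν))) / √c * R2 := by positivity
          linarith
  · have h := hl s hsd
    have hL : 0 < √c / s ^ (1 / 2 : ℝ) := by positivity
    have hLM : (√c / s ^ (1 / 2 : ℝ)) ^ 2 ≤ besselJ ν s ^ 2 + besselY ν s ^ 2 := by
      rw [div_pow, Real.sq_sqrt hc.le, ← Real.sqrt_eq_rpow, Real.sq_sqrt hs.le,
        div_le_iff₀ hs]
      linarith
    have hM : 0 < besselJ ν s ^ 2 + besselY ν s ^ 2 := lt_of_lt_of_le (by positivity) hLM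
    refine ⟨hM, ?_, ?_⟩
    · refine (bq_div _ _ _ hM hlin hL hLM).trans ?_
      have e : 1 / (√c / s ^ (1 / 2 : ℝ)) = 2 / √c * (s ^ (1 / 2 : ℝ) / 2) := by field_simp
      rw [e, add_mul]
      have : 2 / √c * (s ^ (1 / 2 : ℝ) / 2) ≤ 2 / √c * R1 := by gcongr
      have : 0 < 2 / k * R1 := by positivity
      linarith
    · refine (bq_div _ _ _ hM hJ hL hLM).trans ?_
      have r3 := bq_R2_large ν s d hν0 hd0 hsd
      rw [← hR2] at r3
      have e : 1 / (√c / s ^ (1 / 2 : ℝ)) = s ^ (1 / 2 : ℝ) / √c := by field_simp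
      rw [e, add_mul]
      have h1 : s ^ (1 / 2 : ℝ) / √c ≤ ((1 + d ^ (-(1 / 2 + ν))) * R2) / √c := by gcongr
      have h2 : ((1 + d ^ (-(1 / 2 + ν))) * R2) / √c = (1 + d ^ (-(1 / 2 + ν))) / √c * R2 := by ring
      have : 0 < 2 * K / k ^ 2 * R2 := by positivity
      linarith
end

section
/- For every real α > −1 there exist a constant C > 0 and n₀ such that for all integers n ≥ n₀: ∫_0^{1/e} y^α · e^{−4n·y·log(1/y)} dy ≤ C · (n·log n)^{−α−1}. -/
open MeasureTheory intervalIntegral Real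

lemma pointwise_aux (α : ℝ) (n : ℕ) (hn : 2 ≤ n) (y : ℝ) (hy : 0 < y) (hy1 : y ≤ 1 / Real.exp 1) :
    y ^ α * Real.exp (-4 * n * y * Real.log (1 / y)) ≤
      y ^ α * Real.exp (-(n * Real.log n * y)) + y ^ α * Real.exp (-4 * √n) := by
  have hn' : (2:ℝ) ≤ n := by exact_mod_cast hn
  have hs : 0 < √(n:ℝ) := Real.sqrt_pos.2 (by linarith)
  have hss : √(n:ℝ) * √n = n := Real.mul_self_sqrt (by linarith)
  have hl : 0 < Real.log n := Real.log_pos (by linarith)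
  have hya : 0 < y ^ α := Real.rpow_pos_of_pos hy α
  have hL : Real.log (1 / y) = - Real.log y := by rw [one_div, Real.log_inv]
  rw [hL]
  rcases le_total (y * √n) 1 with h | h
  · have h1 : Real.log y + Real.log n / 2 ≤ 0 := by
      rw [← Real.log_sqrt (by linarith), ← Real.log_mul hy.ne' hs.ne']
      exact Real.log_nonpos (by positivity) h
    have h2 : -4 * n * y * -Real.log y ≤ -(n * Real.log n * y) := by
      have : 0 ≤ (n:ℝ) * y := by positivity
      nlinarith [mul_nonneg this (by linarith : 0 ≤ -Real.log y - Real.log n / 2), mul_nonneg this hl.le]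
    have := mul_le_mul_of_nonneg_left (Real.exp_le_exp.2 h2) hya.le
    have : 0 ≤ y ^ α * Real.exp (-4 * √n) := by positivity
    linarith
  · have h1 : Real.log y ≤ -1 := by
      have := Real.log_le_log hy hy1
      rwa [one_div, Real.log_inv, Real.log_exp] at this
    have h3 : √(n:ℝ) ≤ n * y := by
      nlinarith
    have h2 : -4 * n * y * -Real.log y ≤ -4 * √n := by
      have : 0 ≤ (n:ℝ) * y := by positivity
      nlinarith [mul_nonneg this (by linarith : 0 ≤ -Real.log y - 1)]
    have := mul_le_mul_of_nonneg_left (Real.exp_le_exp.2 h2) hya.le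
    have : 0 ≤ y ^ α * Real.exp (-(n * Real.log n * y)) := by positivity
    linarith

/-- **Lemma (technical integral estimate).**
For every real `α > -1` there exist `C > 0` and `n₀` such that for all integers `n ≥ n₀`:
`∫_0^{1/e} y^α e^{-4ny log(1/y)} dy ≤ C (n log n)^{-α-1}`. -/
theorem integral_estimate (α : ℝ) (hα : -1 < α) :
    ∃ C > (0 : ℝ), ∃ n₀ : ℕ, ∀ n : ℕ, n₀ ≤ n →
      (∫ y in (0 : ℝ)..(1 / Real.exp 1),
          y ^ α * Real.exp (-4 * n * y * Real.log (1 / y))) ≤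
        C * ((n : ℝ) * Real.log n) ^ (-α - 1) := by
  have ha : 0 < α + 1 := by linarith
  have hG := Real.Gamma_pos_of_pos ha
  set K : ℝ := ∫ y in (0 : ℝ)..(1 / Real.exp 1), y ^ α with hK
  have he : (0:ℝ) ≤ 1 / Real.exp 1 := by positivity
  have hK0 : 0 ≤ K := intervalIntegral.integral_nonneg he fun y hy => Real.rpow_nonneg hy.1 α
  have hT : Filter.Tendsto (fun n : ℕ => √(n:ℝ)) Filter.atTop Filter.atTop :=
    Real.tendsto_sqrt_atTop.comp tendsto_natCast_atTop_atTop
  have hev := ((tendsto_rpow_mul_exp_neg_mul_atTop_nhds_zero (4 * (α + 1)) 4 (by norm_num)).comp hT).eventually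
    (ge_mem_nhds (zero_lt_one))
  obtain ⟨n₁, h₁⟩ := Filter.eventually_atTop.1 hev
  refine ⟨Real.Gamma (α + 1) + K, by linarith, max 2 n₁, fun n hn => ?_⟩
  have hn2 : 2 ≤ n := (le_max_left _ _).trans hn
  have h1 := h₁ n ((le_max_right _ _).trans hn)
  simp only [Function.comp] at h1
  have hn' : (2:ℝ) ≤ n := by exact_mod_cast hn2
  have hl : 0 < Real.log n := Real.log_pos (by linarith)
  have hM : 0 < (n:ℝ) * Real.log n := by positivity
  have hexp : Real.exp (-4 * √n) ≤ ((n : ℝ) * Real.log n) ^ (-α - 1) := by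
    have e1 : √(n:ℝ) ^ (4 * (α + 1)) = ((n:ℝ) * n) ^ (α + 1) := by
      rw [Real.rpow_mul (by positivity)]
      congr 1
      have hss : √(n:ℝ) ^ 2 = n := Real.sq_sqrt (by linarith)
      have : √(n:ℝ) ^ (4:ℝ) = (√(n:ℝ) ^ 2) ^ 2 := by
        rw [← pow_mul]; exact_mod_cast Real.rpow_natCast (√(n:ℝ)) 4
      rw [this, hss, sq]
    have e2 : ((n : ℝ) * Real.log n) ^ (α + 1) ≤ ((n:ℝ) * n) ^ (α + 1) := by
      apply Real.rpow_le_rpow hM.le _ ha.le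
      have := Real.log_le_self (by linarith : (0:ℝ) ≤ n)
      gcongr
    rw [e1] at h1
    rw [show -α - 1 = -(α + 1) by ring, Real.rpow_neg hM.le, ← one_div,
      le_div_iff₀ (by positivity), mul_comm]
    exact (mul_le_mul_of_nonneg_right e2 (Real.exp_pos _).le).trans h1
  have hi1 : IntegrableOn (fun y : ℝ => y ^ α * Real.exp (-(n * Real.log n * y))) (Set.Ioi 0) := by
    have := integrableOn_rpow_mul_exp_neg_mul_rpow (p := 1) hα one_pos hM
    simpa using this
  have hi2 : IntegrableOn (fun y : ℝ => y ^ α * Real.exp (-4 * √n)) (Set.Ioc 0 (1 / Real.exp 1)) := by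
    have := (intervalIntegral.intervalIntegrable_rpow' (a := 0) (b := 1 / Real.exp 1) hα).mul_const
      (Real.exp (-4 * √n))
    exact (intervalIntegrable_iff_integrableOn_Ioc_of_le he).1 this
  have hi1' := hi1.mono_set (Set.Ioc_subset_Ioi_self : Set.Ioc (0:ℝ) (1 / Real.exp 1) ⊆ Set.Ioi 0)
  rw [intervalIntegral.integral_of_le he]
  have step1 : (∫ y in Set.Ioc (0:ℝ) (1 / Real.exp 1),
        y ^ α * Real.exp (-4 * n * y * Real.log (1 / y))) ≤
      ∫ y in Set.Ioc (0:ℝ) (1 / Real.exp 1), (y ^ α * Real.exp (-(n * Real.log n * y)) +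
        y ^ α * Real.exp (-4 * √n)) := by
    apply integral_mono_of_nonneg
    · refine (ae_restrict_mem measurableSet_Ioc).mono fun y hy => ?_
      have := Real.rpow_nonneg hy.1.le α
      simp only [Pi.zero_apply]; positivity
    · exact hi1'.add hi2
    · exact (ae_restrict_mem measurableSet_Ioc).mono fun y hy =>
        pointwise_aux α n hn2 y hy.1 hy.2
  have step2 : (∫ y in Set.Ioc (0:ℝ) (1 / Real.exp 1), y ^ α * Real.exp (-(n * Real.log n * y))) ≤
      Real.Gamma (α + 1) * ((n : ℝ) * Real.log n) ^ (-α - 1) := by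
    have g := Real.integral_rpow_mul_exp_neg_mul_Ioi ha hM
    rw [add_sub_cancel_right] at g
    have : (1 / ((n : ℝ) * Real.log n)) ^ (α + 1) = ((n : ℝ) * Real.log n) ^ (-α - 1) := by
      rw [show -α - 1 = -(α + 1) by ring, Real.rpow_neg hM.le, one_div, Real.inv_rpow hM.le]
    rw [this, mul_comm _ (Real.Gamma _)] at g
    rw [← g]
    apply setIntegral_mono_set hi1
    · refine (ae_restrict_mem measurableSet_Ioi).mono fun y hy => ?_
      have := Real.rpow_nonneg (le_of_lt hy) α
      simp only [Pi.zero_apply]; positivity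
    · exact Set.Ioc_subset_Ioi_self.eventuallyLE
  rw [integral_add hi1' hi2, MeasureTheory.integral_mul_const, ← intervalIntegral.integral_of_le he (f := fun y : ℝ => y ^ α), ← hK] at step1
  have := mul_le_mul_of_nonneg_left hexp hK0
  linarith
end

section
/- For every real x ∈ [−1,1]: 2·∫_{−1}^1 log|x−t|·ψ(t) dt − π|x| = −2 − 2·log 2 (the Euler–Lagrange equality on the support for the equilibrium measure ψ(t)dt in the external field π|t|, with Lagrange constant ℓ = −2 − 2 log 2). -/
open MeasureTheory Real

/-- The equilibrium density `ψ(x) = (1/π) log((1+√(1-x²))/|x|)`. -/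
noncomputable def psiDens (x : ℝ) : ℝ :=
  (1 / π) * Real.log ((1 + Real.sqrt (1 - x ^ 2)) / |x|)

lemma aux_avg (x s : ℝ) (hs : 0 < s) (a b : ℂ) (hab : a * b = 1) (hsum : a + b = ((2 * x / s : ℝ) : ℂ)) :
    circleAverage (fun z : ℂ => Real.log |x - s * z.re|) 0 1
      = Real.log (s / 2) + log⁺ ‖a‖ + log⁺ ‖b‖ := by
  have h1 : circleAverage (fun z : ℂ => Real.log |x - s * z.re|) 0 1
      = circleAverage (fun z : ℂ => Real.log (s / 2) + (Real.log ‖z - a‖ + Real.log ‖z - b‖)) 0 1 := by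
    apply circleAverage_congr_codiscreteWithin _ one_ne_zero
    have hfin : ({a, b} : Set ℂ)ᶜ ∈ Filter.codiscreteWithin (Metric.sphere (0:ℂ) |1|) := by
      exact compl_finite_mem_codiscreteWithin (Set.toFinite _)
    filter_upwards [hfin, Filter.self_mem_codiscreteWithin _] with z hz hz1
    have hza : z - a ≠ 0 := by intro h; apply hz; left; exact sub_eq_zero.1 h
    have hzb : z - b ≠ 0 := by intro h; apply hz; right; exact sub_eq_zero.1 h
    have hn : ‖z‖ = 1 := by simpa using hz1
    have hzc : z * (starRingEnd ℂ) z = 1 := by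
      rw [Complex.mul_conj, Complex.normSq_eq_norm_sq, hn]; simp
    have hre : z + (starRingEnd ℂ) z = ((2 * z.re : ℝ) : ℂ) := Complex.add_conj z
    have key : (z - a) * (z - b) = z * ((2 * z.re - 2 * x / s : ℝ) : ℂ) := by
      have : (z - a) * (z - b) = z * z - (a + b) * z + a * b := by ring
      rw [this, hab, hsum, Complex.ofReal_sub, ← hre, ← hzc]; ring
    have key2 : ‖z - a‖ * ‖z - b‖ = |2 * z.re - 2 * x / s| := by
      rw [← norm_mul, key, norm_mul, hn, one_mul, Complex.norm_real, Real.norm_eq_abs]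
    rw [← Real.log_mul (by simpa using hza) (by simpa using hzb), key2, ← Real.log_mul (by positivity)]
    · congr 1
      rw [← abs_neg]
      have habs : s / 2 * |2 * z.re - 2 * x / s| = |s / 2 * (2 * z.re - 2 * x / s)| := by
        rw [abs_mul, abs_of_pos (show 0 < s/2 by positivity)]
      rw [habs]
      congr 1; field_simp; ring
    · rw [← key2]; positivity
  rw [h1, circleAverage_fun_add, circleAverage_fun_add, circleAverage_const,
    circleAverage_log_norm_sub_const_eq_posLog, circleAverage_log_norm_sub_const_eq_posLog]
  · ring
  · exact circleIntegrable_log_norm_sub_const 1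
  · exact circleIntegrable_log_norm_sub_const 1
  · exact circleIntegrable_const _ _ _
  · exact (circleIntegrable_log_norm_sub_const 1).add (circleIntegrable_log_norm_sub_const 1)

lemma aux_half (x s : ℝ) : 
    ∫ θ in (0:ℝ)..π, Real.log |x - s * cos θ| = 
      π * circleAverage (fun z : ℂ => Real.log |x - s * z.re|) 0 1 := by
  have e : ∀ θ, (circleMap 0 1 θ).re = cos θ := by
    intro θ; simp [circleMap, Complex.exp_ofReal_mul_I_re]
  have hi : IntervalIntegrable (fun θ => Real.log |x - s * cos θ|) volume 0 (2*π) := by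
    simp only [Real.log_abs]
    apply MeromorphicOn.intervalIntegrable_log
    intro θ _
    apply AnalyticAt.meromorphicAt
    fun_prop
  have h2 : ∫ θ in π..(2*π), Real.log |x - s * cos θ| = ∫ θ in (0:ℝ)..π, Real.log |x - s * cos θ| := by
    have := intervalIntegral.integral_comp_sub_left (fun θ => Real.log |x - s * cos θ|) (a := 0) (b := π) (2*π)
    simp only [cos_two_pi_sub] at this
    rw [this]; congr 1 <;> ring
  rw [circleAverage_def]
  simp only [e]
  rw [← intervalIntegral.integral_add_adjacent_intervals (a := 0) (b := π) (c := 2*π) (hi.mono_set _) (hi.mono_set _), h2]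
  · simp only [smul_eq_mul]; field_simp; ring
  · rw [Set.uIcc_of_le pi_pos.le, Set.uIcc_of_le two_pi_pos.le]; exact Set.Icc_subset_Icc le_rfl (by linarith [pi_pos])
  · rw [Set.uIcc_of_le (by linarith [pi_pos]), Set.uIcc_of_le two_pi_pos.le]; exact Set.Icc_subset_Icc pi_pos.le le_rfl

lemma aux_F1 (x s : ℝ) (hs : 0 < s) (hx : 0 ≤ x) (hxs : x ≤ s) :
    ∫ θ in (0:ℝ)..π, Real.log |x - s * cos θ| = π * Real.log (s / 2) := by
  have hr : (x/s)^2 ≤ 1 := by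
    have : x / s ≤ 1 := (div_le_one hs).2 hxs
    have : 0 ≤ x / s := by positivity
    nlinarith
  have hq := Real.sq_sqrt (sub_nonneg.2 hr)
  have hn : ‖(⟨x/s, √(1-(x/s)^2)⟩ : ℂ)‖ = 1 := by
    rw [Complex.norm_def, Complex.normSq_mk, ← sq, ← sq, hq]; simp
  have hn' : ‖(⟨x/s, -√(1-(x/s)^2)⟩ : ℂ)‖ = 1 := by
    rw [Complex.norm_def, Complex.normSq_mk, ← sq, ← sq, neg_sq, hq]; simp
  rw [aux_half, aux_avg x s hs ⟨x/s, √(1-(x/s)^2)⟩ ⟨x/s, -√(1-(x/s)^2)⟩, hn, hn']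
  · simp
  · apply Complex.ext
    · simp; nlinarith
    · simp; ring
  · apply Complex.ext
    · simp; ring
    · simp

lemma aux_F2 (x s : ℝ) (hs : 0 < s) (hxs : s < x) :
    ∫ θ in (0:ℝ)..π, Real.log |x - s * cos θ| = π * Real.log ((x + √(x^2-s^2)) / 2) := by
  have hp : 0 ≤ x^2 - s^2 := by nlinarith
  have hq := Real.sq_sqrt hp
  set r := √(x^2-s^2) with hr
  have hr0 : 0 ≤ r := Real.sqrt_nonneg _
  have hrx : r ≤ x := by rw [hr]; apply Real.sqrt_le_iff.2; constructor <;> nlinarith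
  have hprod : (x + r) * (x - r) = s^2 := by nlinarith
  have hA : 1 ≤ (x + r)/s := by rw [le_div_iff₀ hs]; linarith
  have hB0 : 0 ≤ (x - r)/s := div_nonneg (by linarith) hs.le
  have hAB : (x + r)/s * ((x - r)/s) = 1 := by field_simp; linarith
  have hB : (x - r)/s ≤ 1 := by nlinarith
  rw [aux_half, aux_avg x s hs (((x+r)/s : ℝ) : ℂ) (((x-r)/s : ℝ) : ℂ), Complex.norm_real, Complex.norm_real,
    Real.posLog_eq_log, (Real.posLog_eq_zero_iff _).2, Real.norm_eq_abs, abs_of_nonneg (by linarith : 0 ≤ (x+r)/s), add_zero,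
    ← Real.log_mul]
  · congr 2; field_simp
  · positivity
  · linarith
  · simp only [Real.norm_eq_abs, abs_abs]; rwa [abs_of_nonneg hB0]
  · simp only [Real.norm_eq_abs, abs_abs]; rwa [abs_of_nonneg (by linarith)]
  · rw [← Complex.ofReal_mul, hAB]; simp
  · rw [← Complex.ofReal_add]; congr 1; field_simp; ring

lemma aux_L (c : ℝ) (hc : 0 < c) (hc1 : c ≤ 1) :
    IntervalIntegrable (fun s => (√(s^2 - c^2))⁻¹) volume 0 1 ∧
    ∫ s in (0:ℝ)..1, (√(s^2 - c^2))⁻¹ = Real.log ((1 + √(1 - c^2)) / c) := by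
  have z : ∀ s ∈ Set.uIcc 0 c, (√(s^2 - c^2))⁻¹ = 0 := by
    intro s hs
    rw [Set.uIcc_of_le hc.le] at hs
    rw [Real.sqrt_eq_zero_of_nonpos, inv_zero]
    nlinarith [hs.1, hs.2]
  have i1 : IntervalIntegrable (fun s => (√(s^2 - c^2))⁻¹) volume 0 c := by
    have : IntervalIntegrable (fun _ => (0:ℝ)) volume 0 c := by simp
    exact this.congr (fun s hs => (z s (Set.uIoc_subset_uIcc hs)).symm)
  have e1 : ∫ s in (0:ℝ)..c, (√(s^2 - c^2))⁻¹ = 0 := by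
    rw [intervalIntegral.integral_congr (g := fun _ => 0) z]; simp
  have hcont : ContinuousOn (fun s : ℝ => Real.log (s + √(s^2 - c^2))) (Set.Icc c 1) := by
    apply ContinuousOn.log
    · fun_prop
    · intro s hs
      have := Real.sqrt_nonneg (s^2-c^2)
      have := hs.1
      linarith
  have hd : ∀ s ∈ Set.Ioo c 1, HasDerivAt (fun s : ℝ => Real.log (s + √(s^2 - c^2))) ((√(s^2 - c^2))⁻¹) s := by
    intro s hs
    have hpos : 0 < s^2 - c^2 := by nlinarith [hs.1]
    have hr := Real.sqrt_pos.2 hpos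
    have hsp : 0 < s := hc.trans hs.1
    have h1 : HasDerivAt (fun s : ℝ => s^2 - c^2) (2*s) s := by
      simpa using (hasDerivAt_pow 2 s).sub_const (c^2)
    have h2 := ((hasDerivAt_id' s).fun_add (h1.sqrt hpos.ne')).log (by positivity)
    refine h2.congr_deriv ?_
    field_simp
    ring
  have i2 : IntervalIntegrable (fun s => (√(s^2 - c^2))⁻¹) volume c 1 := by
    apply intervalIntegral.intervalIntegrable_deriv_of_nonneg (g := fun s : ℝ => Real.log (s + √(s^2 - c^2)))
    · rwa [Set.uIcc_of_le hc1]
    · rwa [min_eq_left hc1, max_eq_right hc1]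
    · intro s _; positivity
  refine ⟨i1.trans i2, ?_⟩
  rw [← intervalIntegral.integral_add_adjacent_intervals i1 i2, e1,
    intervalIntegral.integral_eq_sub_of_hasDerivAt_of_le hc1 hcont hd i2, Real.log_div _ hc.ne']
  · simp
  · positivity

lemma aux_log2 (a b : ℝ) : IntervalIntegrable (fun u => (Real.log u)^2) volume a b := by
  have key : ∀ b, 0 < b → IntervalIntegrable (fun u => (Real.log u)^2) volume 0 b := by
    intro b hb
    apply intervalIntegral.intervalIntegrable_deriv_of_nonneg
      (g := fun u : ℝ => (2 * (√u * Real.log (√u)))^2 - 2 * (u * Real.log u) + 2 * u)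
    · apply Continuous.continuousOn
      have h := Real.continuous_mul_log
      have h2 := h.comp Real.continuous_sqrt
      have h2' : Continuous (fun u : ℝ => √u * Real.log √u) := h2
      fun_prop
    · rw [min_eq_left hb.le, max_eq_right hb.le]
      intro u hu
      have hu0 : 0 < u := hu.1
      have h0 : HasDerivAt (fun u : ℝ => u * (Real.log u)^2 - 2 * (u * Real.log u) + 2 * u) ((Real.log u)^2) u := by
        have hl := Real.hasDerivAt_log hu0.ne'
        have := (((hasDerivAt_id' u).fun_mul (hl.fun_pow 2)).fun_sub (((hasDerivAt_id' u).fun_mul hl).const_mul 2)).fun_add ((hasDerivAt_id' u).const_mul 2)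
        refine this.congr_deriv ?_
        push_cast
        field_simp
        ring
      apply h0.congr_of_eventuallyEq
      filter_upwards [lt_mem_nhds hu0] with v hv
      rw [Real.log_sqrt hv.le, show (2 * (√v * (Real.log v / 2)))^2 = (√v)^2 * (Real.log v)^2 by ring, Real.sq_sqrt hv.le]
    · intro u _; positivity
  apply intervalIntegrable_of_even
  · intro u; simp
  · intro b hb; exact key b hb
  · exact enorm_ne_top
  · exact enorm_ne_top

lemma aux_int (x : ℝ) : IntervalIntegrable (fun t => Real.log |x - t| * Real.log ((1 + √(1 - t ^ 2)) / |t|)) volume (-1) 1 := by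
  have h1 : IntervalIntegrable (fun t => (Real.log (x - t))^2) volume (-1) 1 := by
    have := (aux_log2 (x+1) (x-1)).comp_sub_left x
    simpa using this
  have h2 := aux_log2 (-1) 1
  have hb := (h1.add h2).add (intervalIntegrable_const (c := (Real.log 2)^2))
  apply hb.mono_fun'
  · apply Measurable.aestronglyMeasurable; fun_prop
  · rw [Set.uIoc_of_le (by norm_num)]
    filter_upwards [ae_restrict_mem measurableSet_Ioc] with t ht
    simp only [Real.log_abs, Real.norm_eq_abs]
    by_cases h0 : t = 0
    · subst h0; simp; positivity
    have hp : 0 < |t| := abs_pos.2 h0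
    have hle : √(1 - t^2) ≤ 1 := by apply Real.sqrt_le_iff.2; constructor <;> nlinarith [sq_nonneg t]
    have hn := Real.sqrt_nonneg (1 - t^2)
    have ht1 : |t| ≤ 1 := abs_le.2 ⟨ht.1.le, ht.2⟩
    rw [Real.log_div (by positivity) hp.ne', Real.log_abs]
    have a1 : 0 ≤ Real.log (1 + √(1 - t^2)) := Real.log_nonneg (by linarith)
    have a2 : Real.log (1 + √(1 - t^2)) ≤ Real.log 2 := Real.log_le_log (by linarith) (by linarith)
    have a3 : Real.log t ≤ 0 := by rw [← Real.log_abs]; exact Real.log_nonpos hp.le ht1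
    set A := Real.log (1 + √(1 - t^2))
    set B := Real.log t
    set C := Real.log (x - t)
    rw [abs_mul, abs_of_nonneg (by linarith : 0 ≤ A - B), ← sq_abs C]
    have : (A - B) ≤ Real.log 2 - B := by linarith
    have : (A-B)^2 ≤ (Real.log 2 - B)^2 := by apply pow_le_pow_left₀ <;> linarith
    nlinarith [sq_nonneg (|C| - (A - B)), sq_nonneg (Real.log 2 + B), sq_nonneg (|C|)]
lemma aux_J1 (x : ℝ) (hx : 0 ≤ x) :
    IntervalIntegrable (fun s => Real.log ((x + √(x^2-s^2)) / 2)) volume 0 x ∧ 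
    ∫ s in (0:ℝ)..x, Real.log ((x + √(x^2-s^2)) / 2) = x * Real.log x - x + x * π / 2 - x * Real.log 2 := by
  rcases hx.eq_or_lt with rfl | hx
  · simp
  have hne : ∀ s, x + √(x^2-s^2) ≠ 0 := fun s => by positivity
  have hi : IntervalIntegrable (fun s => Real.log ((x + √(x^2-s^2)) / 2)) volume 0 x := by
    apply Continuous.intervalIntegrable
    apply Continuous.log
    · fun_prop
    · intro s; have := hne s; positivity
  refine ⟨hi, ?_⟩
  rw [intervalIntegral.integral_eq_sub_of_hasDerivAt_of_le (f := fun s => s * Real.log (x+√(x^2-s^2)) - s + x * arcsin (s/x) - s * Real.log 2) hx.le _ _ hi]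
  · simp [hx.ne']; ring
  · apply Continuous.continuousOn
    have : Continuous (fun s => Real.log (x+√(x^2-s^2))) := Continuous.log (by fun_prop) hne
    fun_prop
  · intro s hs
    have hpos : 0 < x^2 - s^2 := by nlinarith [hs.1, hs.2]
    have hr := Real.sqrt_pos.2 hpos
    have h1 : HasDerivAt (fun s : ℝ => x^2 - s^2) (-(2*s)) s := by
      simpa using (hasDerivAt_pow 2 s).const_sub (x^2)
    have h2 := ((h1.sqrt hpos.ne').const_add x).log (hne s)
    have hlt : s / x < 1 := (div_lt_one hx).2 hs.2
    have hgt : 0 < s / x := div_pos hs.1 hx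
    have h3 := (Real.hasDerivAt_arcsin (x := s/x) (by linarith) (by linarith)).comp s ((hasDerivAt_id s).div_const x)
    have h4 := ((((hasDerivAt_id' s).fun_mul h2).fun_sub (hasDerivAt_id' s)).fun_add (h3.const_mul x)).fun_sub ((hasDerivAt_id' s).mul_const (Real.log 2))
    refine h4.congr_deriv ?_
    have e : √(1 - (s/x)^2) = √(x^2-s^2)/x := by
      rw [show 1 - (s/x)^2 = (x^2-s^2)/x^2 by field_simp, Real.sqrt_div hpos.le, Real.sqrt_sq hx.le]
    rw [Real.log_div (hne s) (by norm_num)]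
    simp only [e]
    have hsq := Real.sq_sqrt hpos.le
    have := hne s
    set r := √(x^2-s^2)
    field_simp
    have : s^2 = x^2 - r^2 := by linarith
    try rw [this]
    ring

lemma aux_J2 (x : ℝ) :
    IntervalIntegrable (fun s => Real.log (s / 2)) volume x 1 ∧ 
    ∫ s in x..1, Real.log (s / 2) = - 1 - Real.log 2 - x * Real.log x + x + x * Real.log 2 := by
  constructor
  · apply MeromorphicOn.intervalIntegrable_log
    intro θ _
    apply AnalyticAt.meromorphicAt
    fun_prop (disch := norm_num)
  · rw [intervalIntegral.integral_comp_div (fun s => Real.log s) (by norm_num), integral_log]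
    rw [Real.log_div one_ne_zero two_ne_zero]
    rcases eq_or_ne x 0 with rfl | h
    · simp; ring
    · rw [Real.log_div h two_ne_zero]; simp; ring

lemma aux_cv (x s : ℝ) (hs : 0 < s) (hs1 : s ≤ 1) :
    ∫ t in Set.Ioc (-1:ℝ) 1, Real.log |x - t| * (√(s^2 - t^2))⁻¹ = ∫ θ in (0:ℝ)..π, Real.log |x - s * cos θ| := by
  rw [setIntegral_eq_of_subset_of_forall_sdiff_eq_zero (s := Set.Ioo (-s) s) measurableSet_Ioc]
  · have himg : (fun θ => s * cos θ) '' (Set.Ioo 0 π) = Set.Ioo (-s) s := by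
      ext t
      constructor
      · rintro ⟨θ, hθ, rfl⟩
        have h1 := Real.cos_lt_cos_of_nonneg_of_le_pi le_rfl hθ.2.le hθ.1
        have h2 := Real.cos_lt_cos_of_nonneg_of_le_pi hθ.1.le le_rfl hθ.2
        rw [cos_zero] at h1; rw [cos_pi] at h2
        constructor <;> simp only <;> nlinarith
      · intro ht
        have h1 : t / s < 1 := (div_lt_one hs).2 ht.2
        have h2 : -1 < t / s := by rw [lt_div_iff₀ hs]; linarith [ht.1]
        refine ⟨arccos (t/s), ⟨arccos_pos.2 h1, ?_⟩, ?_⟩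
        · refine lt_of_le_of_ne (arccos_le_pi _) ?_
          intro h; rw [arccos_eq_pi] at h; linarith
        · simp only; rw [cos_arccos h2.le h1.le]; field_simp
    rw [← himg, integral_image_eq_integral_abs_deriv_smul (f' := fun θ => s * (- sin θ)) measurableSet_Ioo,
      intervalIntegral.integral_of_le pi_pos.le, integral_Ioc_eq_integral_Ioo]
    · apply setIntegral_congr_fun measurableSet_Ioo
      intro θ hθ
      have hsin := sin_pos_of_mem_Ioo hθ
      have : √(s^2 - (s * cos θ)^2) = s * sin θ := by
        rw [show s^2 - (s * cos θ)^2 = (s * sin θ)^2 by nlinarith [sin_sq_add_cos_sq θ], Real.sqrt_sq (by positivity)]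
      simp only [this, smul_eq_mul]
      rw [mul_neg, abs_neg, abs_of_pos (by positivity)]
      field_simp
    · intro θ _
      exact ((hasDerivAt_cos θ).const_mul s).hasDerivWithinAt
    · intro a ha b hb hab
      exact injOn_cos ⟨ha.1.le, ha.2.le⟩ ⟨hb.1.le, hb.2.le⟩ (mul_left_cancel₀ hs.ne' hab)
  · intro t ht; exact ⟨by linarith [ht.1], by linarith [ht.2]⟩
  · intro t ht
    have : s^2 - t^2 ≤ 0 := by
      by_contra! h
      exact ht.2 (abs_lt.1 (abs_lt_of_sq_lt_sq (by linarith) hs.le))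
    rw [Real.sqrt_eq_zero_of_nonpos this]; simp

lemma aux_swap (x : ℝ) :
    ∫ t in (-1 : ℝ)..1, Real.log |x - t| * Real.log ((1 + √(1 - t ^ 2)) / |t|)
      = ∫ s in Set.Ioc (0:ℝ) 1, ∫ θ in (0:ℝ)..π, Real.log |x - s * cos θ| := by
  have hae : ∀ᵐ t ∂(volume.restrict (Set.Ioc (-1:ℝ) 1)), 0 < |t| ∧ |t| ≤ 1 := by
    have h0 : ∀ᵐ t : ℝ ∂(volume.restrict (Set.Ioc (-1:ℝ) 1)), t ≠ 0 :=
      ae_restrict_of_ae (Measure.ae_ne volume 0)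
    filter_upwards [h0, ae_restrict_mem measurableSet_Ioc] with t ht ht2
    exact ⟨abs_pos.2 ht, abs_le.2 ⟨ht2.1.le, ht2.2⟩⟩
  have hI := aux_int x
  rw [intervalIntegrable_iff_integrableOn_Ioc_of_le (by norm_num)] at hI
  have hint : Integrable (Function.uncurry fun t s : ℝ => Real.log |x - t| * (√(s^2 - t^2))⁻¹)
      ((volume.restrict (Set.Ioc (-1:ℝ) 1)).prod (volume.restrict (Set.Ioc (0:ℝ) 1))) := by
    rw [integrable_prod_iff]
    · constructor
      · filter_upwards [hae] with t ht
        have := (aux_L |t| ht.1 ht.2).1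
        rw [intervalIntegrable_iff_integrableOn_Ioc_of_le (by norm_num)] at this
        simp only [sq_abs] at this
        exact Integrable.const_mul this (Real.log |x - t|)
      · refine (hI.norm).congr ?_
        filter_upwards [hae] with t ht
        have h := (aux_L |t| ht.1 ht.2).2
        rw [intervalIntegral.integral_of_le (by norm_num)] at h
        simp only [sq_abs] at h
        have hn : 0 ≤ Real.log ((1 + √(1 - t ^ 2)) / |t|) := by
          rw [← h]; apply integral_nonneg; intro s; positivity
        simp only [Function.uncurry, norm_mul, integral_const_mul]
        congr 1
        rw [Real.norm_of_nonneg hn, ← h]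
        congr 1
        ext s
        rw [Real.norm_of_nonneg (by positivity)]
    · apply Measurable.aestronglyMeasurable
      unfold Function.uncurry
      fun_prop
  rw [intervalIntegral.integral_of_le (by norm_num)]
  have e1 : ∫ t in Set.Ioc (-1:ℝ) 1, Real.log |x - t| * Real.log ((1 + √(1 - t ^ 2)) / |t|)
      = ∫ t in Set.Ioc (-1:ℝ) 1, ∫ s in Set.Ioc (0:ℝ) 1, Real.log |x - t| * (√(s^2 - t^2))⁻¹ := by
    apply integral_congr_ae
    filter_upwards [hae] with t ht
    have h := (aux_L |t| ht.1 ht.2).2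
    rw [intervalIntegral.integral_of_le (by norm_num)] at h
    simp only [sq_abs] at h
    rw [integral_const_mul, h]
  rw [e1, integral_integral_swap hint]
  apply setIntegral_congr_fun measurableSet_Ioc
  intro s hs
  exact aux_cv x s hs.1 hs.2

lemma aux_val (x : ℝ) (hx0 : 0 ≤ x) (hx1 : x ≤ 1) :
    ∫ t in (-1 : ℝ)..1, Real.log |x - t| * Real.log ((1 + √(1 - t ^ 2)) / |t|)
      = π * (-1 - Real.log 2 + x * π / 2) := by
  obtain ⟨i1, j1⟩ := aux_J1 x hx0
  obtain ⟨i2, j2⟩ := aux_J2 x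
  have c1 : Set.EqOn (fun s => π * Real.log ((x + √(x^2-s^2)) / 2))
      (fun s => ∫ θ in (0:ℝ)..π, Real.log |x - s * cos θ|) (Set.uIoc 0 x) := by
    intro s hs
    rw [Set.uIoc_of_le hx0] at hs
    simp only
    rcases hs.2.eq_or_lt with h | h
    · subst h; rw [aux_F1 s s hs.1 hx0 le_rfl]; simp
    · rw [aux_F2 x s hs.1 h]
  have c2 : Set.EqOn (fun s => π * Real.log (s / 2))
      (fun s => ∫ θ in (0:ℝ)..π, Real.log |x - s * cos θ|) (Set.uIoc x 1) := by
    intro s hs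
    rw [Set.uIoc_of_le hx1] at hs
    simp only
    rw [aux_F1 x s (by linarith [hs.1]) hx0 hs.1.le]
  rw [aux_swap, ← intervalIntegral.integral_of_le zero_le_one,
    ← intervalIntegral.integral_add_adjacent_intervals ((i1.const_mul π).congr c1) ((i2.const_mul π).congr c2),
    ← intervalIntegral.integral_congr_ae (Filter.Eventually.of_forall fun s hs => c1 hs),
    ← intervalIntegral.integral_congr_ae (Filter.Eventually.of_forall fun s hs => c2 hs),
    intervalIntegral.integral_const_mul, intervalIntegral.integral_const_mul, j1, j2]
  ring

/-- **Euler–Lagrange equality on the support.**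
For every `x ∈ [-1,1]`:
`2 ∫_{-1}^1 log|x-t| ψ(t) dt - π|x| = -2 - 2 log 2`. -/
theorem euler_lagrange_on_support (x : ℝ) (hx : x ∈ Set.Icc (-1 : ℝ) 1) :
    2 * (∫ t in (-1 : ℝ)..1, Real.log |x - t| * psiDens t) - π * |x| =
      -2 - 2 * Real.log 2 := by
  have hsym : ∫ t in (-1 : ℝ)..1, Real.log |x - t| * Real.log ((1 + √(1 - t ^ 2)) / |t|)
      = ∫ t in (-1 : ℝ)..1, Real.log |(|x|) - t| * Real.log ((1 + √(1 - t ^ 2)) / |t|) := by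
    rcases le_total 0 x with h | h
    · rw [abs_of_nonneg h]
    · rw [abs_of_nonpos h]
      have := intervalIntegral.integral_comp_neg (a := -1) (b := 1)
        (fun t => Real.log |x - t| * Real.log ((1 + √(1 - t ^ 2)) / |t|))
      rw [neg_neg] at this
      rw [← this]
      congr 1
      ext t
      rw [neg_sq, abs_neg t, ← abs_neg (x - -t)]
      congr 3
      ring
  have hpsi : ∫ t in (-1 : ℝ)..1, Real.log |x - t| * psiDens t
      = (1 / π) * ∫ t in (-1 : ℝ)..1, Real.log |x - t| * Real.log ((1 + √(1 - t ^ 2)) / |t|) := by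
    rw [← intervalIntegral.integral_const_mul]
    congr 1
    ext t
    unfold psiDens
    ring
  rw [hpsi, hsym, aux_val |x| (abs_nonneg x) (abs_le.2 hx)]
  have := pi_pos.ne'
  field_simp
  ring
end

section
/- For every x ∈ (−1,1): lim_{ε→0+} ( g(x+iε) − g(x−iε) ) = 2πi·∫_x^1 ψ(s) ds, and for every real x < −1: lim_{ε→0+} ( g(x+iε) − g(x−iε) ) = 2πi, while for every real x > 1: lim_{ε→0+} ( g(x+iε) − g(x−iε) ) = 0. -/
open MeasureTheory Filter Real Topology

/-- The `g`-function `g(z) = ∫_{-1}^1 Log(z-x) ψ(x) dx` (principal logarithm). -/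
noncomputable def gFun (z : ℂ) : ℂ :=
  ∫ x in (-1 : ℝ)..1, Complex.log (z - x) * (psiDens x : ℂ)

theorem psi_aux_cont : Continuous fun t : ℝ => Real.log (1 + Real.sqrt (1 - t ^ 2)) := by
  refine Continuous.log (by fun_prop) fun t => ?_
  have := Real.sqrt_nonneg (1 - t ^ 2)
  positivity

theorem psi_eq {t : ℝ} (ht : t ≠ 0) :
    psiDens t = (1 / π) * (Real.log (1 + Real.sqrt (1 - t ^ 2)) - Real.log t) := by
  have := Real.sqrt_nonneg (1 - t ^ 2)
  rw [psiDens, Real.log_div (by positivity) (by positivity), Real.log_abs]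

theorem psi_int (a b : ℝ) : IntervalIntegrable psiDens volume a b := by
  have h : IntervalIntegrable
      (fun t : ℝ => (1 / π) * (Real.log (1 + Real.sqrt (1 - t ^ 2)) - Real.log t)) volume a b :=
    ((psi_aux_cont.intervalIntegrable a b).sub
      intervalIntegral.intervalIntegrable_log').const_mul _
  refine h.congr_ae ?_
  refine ae_restrict_of_ae ?_
  filter_upwards [Measure.ae_ne volume (0 : ℝ)] with t ht
  exact (psi_eq ht).symm

theorem psi_int_ofReal (a b : ℝ) :
    IntervalIntegrable (fun s : ℝ => (psiDens s : ℂ)) volume a b :=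
  ⟨(psi_int a b).1.ofReal, (psi_int a b).2.ofReal⟩

theorem psi_deriv {t : ℝ} (h1 : -1 < t) (h2 : t < 1) (h0 : t ≠ 0) :
    HasDerivAt (fun t : ℝ => (1 / π) *
      (t * Real.log (1 + Real.sqrt (1 - t ^ 2)) - t * Real.log t + Real.arcsin t))
      (psiDens t) t := by
  have hp : 0 < 1 - t ^ 2 := by nlinarith
  have hr : 0 < Real.sqrt (1 - t ^ 2) := Real.sqrt_pos.2 hp
  have hr2 : Real.sqrt (1 - t ^ 2) ^ 2 = 1 - t ^ 2 := Real.sq_sqrt hp.le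
  have hs : HasDerivAt (fun t : ℝ => 1 + Real.sqrt (1 - t ^ 2))
      ((-(2 * t)) / (2 * Real.sqrt (1 - t ^ 2))) t := by
    have h := (((hasDerivAt_id t).pow 2).const_sub 1).sqrt hp.ne'
    simpa using h.const_add 1
  have hl := hs.log (by positivity)
  have H := ((((hasDerivAt_id t).mul hl).sub
    ((hasDerivAt_id t).mul (Real.hasDerivAt_log h0))).add
    (Real.hasDerivAt_arcsin h1.ne' h2.ne)).const_mul (1 / π)
  refine H.congr_deriv ?_
  rw [psi_eq h0]
  congr 1
  simp only [id]
  set r := Real.sqrt (1 - t ^ 2)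
  have : t ^ 2 = 1 - r ^ 2 := by linarith
  field_simp
  rw [this]
  ring

theorem psi_total : ∫ s in (-1 : ℝ)..1, psiDens s = 1 := by
  rw [MeasureTheory.integral_eq_of_hasDerivAt_off_countable_of_le _ psiDens (by norm_num)
    (Set.countable_singleton (0 : ℝ)) ?_ (fun t ht => psi_deriv ht.1.1 ht.1.2 ht.2)
    (psi_int _ _)]
  · have := Real.pi_ne_zero
    simp
    field_simp
    ring
  · refine Continuous.continuousOn ?_
    exact continuous_const.mul (((continuous_id.mul psi_aux_cont).sub
      Real.continuous_mul_log).add Real.continuous_arcsin)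

theorem log_psi_int (x c : ℝ) (hc : c ≠ 0) :
    IntervalIntegrable (fun s : ℝ => Complex.log (x + c * Complex.I - s) * (psiDens s : ℂ))
      volume (-1) 1 := by
  have h : IntervalIntegrable (fun s : ℝ => (psiDens s : ℂ)) volume (-1) 1 := psi_int_ofReal _ _
  refine h.continuousOn_mul (Continuous.continuousOn ?_)
  refine Continuous.clog (by fun_prop) fun s => ?_
  right
  simpa using hc

theorem log_jump (y c : ℝ) (hc : 0 < c) :
    Complex.log (y + c * Complex.I) - Complex.log (y - c * Complex.I) =
      2 * Complex.I * (Complex.arg (y + c * Complex.I) : ℂ) := by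
  have h1 : (y - c * Complex.I : ℂ) = (starRingEnd ℂ) (y + c * Complex.I) := by
    simp [sub_eq_add_neg]
  have h2 : Complex.arg (y + c * Complex.I) ≠ π := by
    intro h
    have := (Complex.arg_eq_pi_iff.1 h).2
    simp at this
    exact hc.ne' this
  rw [h1, Complex.log_conj _ h2]
  apply Complex.ext
  · simp
  · simp [Complex.log_im]
    ring

theorem arg_lim (y : ℝ) (hy : y ≠ 0) :
    Tendsto (fun c : ℝ => Complex.arg (y + c * Complex.I)) (𝓝[>] 0)
      (𝓝 (if y < 0 then π else 0)) := by
  have hc : Tendsto (fun c : ℝ => (y + c * Complex.I : ℂ)) (𝓝[>] 0) (𝓝 (y : ℂ)) := by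
    have : Continuous (fun c : ℝ => (y + c * Complex.I : ℂ)) := by fun_prop
    have := this.tendsto 0
    simp only [Complex.ofReal_zero, zero_mul, add_zero] at this
    exact this.mono_left nhdsWithin_le_nhds
  split_ifs with h
  · refine (Complex.tendsto_arg_nhdsWithin_im_nonneg_of_re_neg_of_im_zero (z := (y : ℂ))
      (by simpa using h) (by simp)).comp (tendsto_nhdsWithin_iff.2 ⟨hc, ?_⟩)
    filter_upwards [self_mem_nhdsWithin] with c hc
    simpa using (le_of_lt hc)
  · have hp : 0 < y := lt_of_le_of_ne (not_lt.1 h) hy.symm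
    have := (Complex.continuousAt_arg (x := (y : ℂ)) (by left; simpa using hp)).tendsto.comp hc
    rwa [Complex.arg_ofReal_of_nonneg hp.le] at this

theorem jump_general (x : ℝ) :
    Tendsto (fun ε : ℝ => gFun (x + ε * Complex.I) - gFun (x - ε * Complex.I))
      (𝓝[>] 0) (𝓝 (∫ s in (-1 : ℝ)..1,
        2 * Complex.I * ((if x - s < 0 then π else 0 : ℝ) : ℂ) * (psiDens s : ℂ))) := by
  have key : Tendsto (fun ε : ℝ => ∫ s in (-1 : ℝ)..1,
      2 * Complex.I * (Complex.arg ((x - s : ℝ) + ε * Complex.I) : ℂ) * (psiDens s : ℂ))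
      (𝓝[>] 0) (𝓝 (∫ s in (-1 : ℝ)..1,
        2 * Complex.I * ((if x - s < 0 then π else 0 : ℝ) : ℂ) * (psiDens s : ℂ))) := by
    refine intervalIntegral.tendsto_integral_filter_of_dominated_convergence
      (fun s => 2 * π * |psiDens s|) ?_ ?_ ?_ ?_
    · refine Eventually.of_forall fun ε => ?_
      have hm : AEStronglyMeasurable (fun s : ℝ => (psiDens s : ℂ))
          (volume.restrict (Set.uIoc (-1) 1)) := by
        have h : IntervalIntegrable (fun s : ℝ => (psiDens s : ℂ)) volume (-1) 1 :=
          psi_int_ofReal _ _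
        exact (intervalIntegrable_iff.1 h).aestronglyMeasurable
      refine AEStronglyMeasurable.mul (Measurable.aestronglyMeasurable ?_) hm
      have : Measurable (fun s : ℝ => (((x - s : ℝ) : ℂ) + ε * Complex.I)) :=
        Continuous.measurable (by fun_prop)
      exact measurable_const.mul
        (Complex.measurable_ofReal.comp (Complex.measurable_arg.comp this))
    · refine Eventually.of_forall fun ε => Eventually.of_forall fun s _ => ?_
      rw [norm_mul, norm_mul, Complex.norm_real, Complex.norm_real, Real.norm_eq_abs,
        Real.norm_eq_abs]
      have := Complex.abs_arg_le_pi (((x - s : ℝ) : ℂ) + ε * Complex.I)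
      simp only [norm_mul, Complex.norm_I, Complex.norm_ofNat, mul_one]
      gcongr
    · exact (psi_int _ _).abs.const_mul _
    · filter_upwards [Measure.ae_ne volume x] with s hs _
      have := arg_lim (x - s) (sub_ne_zero.2 hs.symm)
      exact ((Complex.continuous_ofReal.tendsto _).comp this |>.const_mul _).mul_const _
  refine key.congr' ?_
  filter_upwards [self_mem_nhdsWithin] with ε hε
  have hε : 0 < ε := hε
  have e : (x - ε * Complex.I : ℂ) = x + (-ε : ℝ) * Complex.I := by push_cast; ring
  rw [gFun, gFun, e, ← intervalIntegral.integral_sub (log_psi_int x ε hε.ne')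
    (log_psi_int x (-ε) (neg_ne_zero.2 hε.ne'))]
  refine intervalIntegral.integral_congr fun s _ => ?_
  have := log_jump (x - s) ε hε
  rw [← this, ← sub_mul]
  push_cast
  ring_nf

theorem jump_aux (a b : ℝ) :
    ∫ s in a..b, 2 * Complex.I * (π : ℂ) * (psiDens s : ℂ) =
      2 * π * Complex.I * ((∫ s in a..b, psiDens s : ℝ) : ℂ) := by
  rw [intervalIntegral.integral_const_mul, intervalIntegral.integral_ofReal]
  ring

theorem jump_right (x a b : ℝ) (hab : a ≤ b) (hx : x ≤ a) :
    ∫ s in a..b, 2 * Complex.I * ((if x - s < 0 then π else 0 : ℝ) : ℂ) * (psiDens s : ℂ) =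
      2 * π * Complex.I * ((∫ s in a..b, psiDens s : ℝ) : ℂ) := by
  rw [← jump_aux]
  refine intervalIntegral.integral_congr_ae (Eventually.of_forall fun s hs => ?_)
  rw [Set.uIoc_of_le hab] at hs
  rw [if_pos (by linarith [hs.1])]

theorem jump_left (x a b : ℝ) (hab : a ≤ b) (hx : b ≤ x) :
    ∫ s in a..b, 2 * Complex.I * ((if x - s < 0 then π else 0 : ℝ) : ℂ) * (psiDens s : ℂ) =
      0 := by
  refine intervalIntegral.integral_zero_ae (Eventually.of_forall fun s hs => ?_)
  rw [Set.uIoc_of_le hab] at hs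
  rw [if_neg (by linarith [hs.2])]
  simp

theorem jump_int (x a b : ℝ) : IntervalIntegrable (fun s : ℝ =>
    2 * Complex.I * ((if x - s < 0 then π else 0 : ℝ) : ℂ) * (psiDens s : ℂ)) volume a b := by
  have h : IntervalIntegrable (fun s : ℝ => (psiDens s : ℂ)) volume a b := psi_int_ofReal _ _
  rw [intervalIntegrable_iff] at h ⊢
  refine Integrable.bdd_mul (c := 2 * π) h (Measurable.aestronglyMeasurable ?_)
    (Eventually.of_forall fun s => ?_)
  · refine measurable_const.mul (Complex.measurable_ofReal.comp (Measurable.ite ?_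
      measurable_const measurable_const))
    exact measurableSet_lt (by fun_prop) measurable_const
  · split_ifs <;> simp [Real.pi_pos.le, abs_of_pos Real.pi_pos]

/-- **Lemma (jump of the `g`-function across the real axis).**
For `x ∈ (-1,1)`: `g₊(x) - g₋(x) = 2πi ∫_x^1 ψ(s) ds`; for `x < -1` the jump is `2πi`;
for `x > 1` the jump is `0`. -/
theorem g_jump (x : ℝ) :
    (x ∈ Set.Ioo (-1 : ℝ) 1 →
      Tendsto (fun ε : ℝ => gFun (x + ε * Complex.I) - gFun (x - ε * Complex.I))
        (𝓝[>] 0) (𝓝 (2 * π * Complex.I * ((∫ s in x..1, psiDens s : ℝ) : ℂ)))) ∧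
    (x < -1 →
      Tendsto (fun ε : ℝ => gFun (x + ε * Complex.I) - gFun (x - ε * Complex.I))
        (𝓝[>] 0) (𝓝 (2 * π * Complex.I))) ∧
    (1 < x →
      Tendsto (fun ε : ℝ => gFun (x + ε * Complex.I) - gFun (x - ε * Complex.I))
        (𝓝[>] 0) (𝓝 0)) := by
  refine ⟨fun hx => ?_, fun hx => ?_, fun hx => ?_⟩
  · have h := jump_general x
    rwa [← intervalIntegral.integral_add_adjacent_intervals (jump_int x (-1) x) (jump_int x x 1),
      jump_left x _ _ hx.1.le le_rfl, jump_right x _ _ hx.2.le le_rfl, zero_add] at h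
  · have h := jump_general x
    rwa [jump_right x _ _ (by norm_num) hx.le, psi_total, Complex.ofReal_one, mul_one] at h
  · have h := jump_general x
    rwa [jump_left x _ _ (by norm_num) hx.le] at h
end
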